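/- arXiv:1507.04626 — 7 statements merged into one kernel-verified Lean document; each statement's English description precedes it below -/
import Mathlib

section
/- Let m > 0, y₀ > 0 and Ȳ ≥ 0. There exist ε₀ > 0 and c > 0, depending only on m, y₀ and Ȳ, such that for every ε ∈ (0, ε₀] the following holds: if y : [0,∞) → [0,∞) is continuous, differentiable on (0,∞), satisfies y(0) = ε y₀, and y'(t) = −2m y(t)² + Y_R(t) for all t > 0, where the source term satisfies |Y_R(t)| ≤ Ȳ ε^{5/2} (1+εt)^{−2} (εt)^{−1/2}, then for all t > 0 one has |y(t) − ε y₀/(1 + 2 m ε y₀ t)| ≤ c Ȳ (ε/(1+εt))^{3/2}. -/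
open Set

lemma aux_nonpos (h h' : ℝ → ℝ) (hc : ContinuousOn h (Ici 0)) (h0 : h 0 ≤ 0)
    (hd : ∀ t, 0 < t → HasDerivAt h (h' t) t) (hn : ∀ t, 0 < t → 0 < h t → h' t ≤ 0) :
    ∀ t, 0 ≤ t → h t ≤ 0 := by
  intro T hT
  by_contra hcon
  push Not at hcon
  set S : Set ℝ := Icc 0 T ∩ h ⁻¹' (Iic 0) with hS
  have hcT : ContinuousOn h (Icc 0 T) := hc.mono (fun x hx => hx.1)
  have hScl : IsClosed S := hcT.preimage_isClosed_of_isClosed isClosed_Icc isClosed_Iic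
  have hSne : S.Nonempty := ⟨0, ⟨le_refl _, hT⟩, h0⟩
  have hSb : BddAbove S := ⟨T, fun x hx => hx.1.2⟩
  have hmem := hScl.csSup_mem hSne hSb
  set s := sSup S with hs
  have hs0 : 0 ≤ s := hmem.1.1
  have hsT : s ≤ T := hmem.1.2
  have hpos : ∀ x, s < x → x ≤ T → 0 < h x := by
    intro x hx hxT
    by_contra hx'
    push Not at hx'
    have : x ≤ s := le_csSup hSb ⟨⟨by linarith, hxT⟩, hx'⟩
    linarith
  have hanti : AntitoneOn h (Icc s T) := by
    apply antitoneOn_of_deriv_nonpos (convex_Icc s T)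
      (hcT.mono (Icc_subset_Icc_left hs0))
    · intro x hx
      rw [interior_Icc] at hx
      exact (hd x (by linarith [hx.1])).differentiableAt.differentiableWithinAt
    · intro x hx
      rw [interior_Icc] at hx
      rw [(hd x (by linarith [hx.1])).deriv]
      exact hn x (by linarith [hx.1]) (hpos x hx.1 hx.2.le)
  have h1 := hanti ⟨le_refl _, hsT⟩ ⟨hsT, le_refl _⟩ hsT
  have h2 : h s ≤ 0 := hmem.2
  linarith

lemma aux_comp (F G p q g : ℝ → ℝ) (hF : ContinuousOn F (Ici 0)) (hG : ContinuousOn G (Ici 0))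
    (h0 : F 0 = 0) (hGn : ∀ t, 0 ≤ t → 0 ≤ G t)
    (hFd : ∀ t, 0 < t → HasDerivAt F (-p t * F t + q t) t)
    (hGd : ∀ t, 0 < t → HasDerivAt G (g t) t)
    (hp : ∀ t, 0 < t → 0 ≤ p t) (hq : ∀ t, 0 < t → |q t| ≤ g t) :
    ∀ t, 0 ≤ t → |F t| ≤ G t := by
  intro t ht
  have h00 := hGn 0 le_rfl
  rw [abs_le]
  constructor
  · have := aux_nonpos (fun t => -F t - G t) (fun t => -(-p t * F t + q t) - g t)
      (hF.neg.sub hG) (by simp only [h0]; linarith)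
      (fun t ht => (hFd t ht).neg.sub (hGd t ht))
      (fun t ht hh => by
        have h1 := hGn t ht.le
        have h2 := hp t ht
        have h3 := abs_le.1 (hq t ht)
        have : 0 ≤ p t * (-F t) := mul_nonneg h2 (by linarith)
        linarith [h3.1]) t ht
    linarith
  · have := aux_nonpos (fun t => F t - G t) (fun t => (-p t * F t + q t) - g t)
      (hF.sub hG) (by simp only [h0]; linarith)
      (fun t ht => (hFd t ht).sub (hGd t ht))
      (fun t ht hh => by
        have h1 := hGn t ht.le
        have h2 := hp t ht
        have h3 := abs_le.1 (hq t ht)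
        have : 0 ≤ p t * (F t) := mul_nonneg h2 (by linarith)
        linarith [h3.2]) t ht
    linarith

lemma aux_G1 (K ε t : ℝ) (hε : 0 < ε) (ht : 0 < t) :
    HasDerivAt (fun t => 2 * K * ε ^ ((3:ℝ)/2) * Real.arctan (√(ε * t)))
      (K * ε ^ ((5:ℝ)/2) * (1 + ε * t)⁻¹ * (ε * t) ^ (-(1:ℝ)/2)) t := by
  have hs : 0 < ε * t := by positivity
  have h1 : HasDerivAt (fun t => ε * t) ε t := by
    simpa using (hasDerivAt_id t).const_mul ε
  have h2 := ((h1.sqrt hs.ne').arctan).const_mul (2 * K * ε ^ ((3:ℝ)/2))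
  refine h2.congr_deriv ?_
  have e1 : ε ^ ((5:ℝ)/2) = ε ^ ((3:ℝ)/2) * ε := by
    rw [← Real.rpow_add_one hε.ne']; norm_num
  have e2 : (ε * t) ^ (-(1:ℝ)/2) = (√(ε * t))⁻¹ := by
    rw [Real.sqrt_eq_rpow, ← Real.rpow_neg hs.le]; norm_num
  rw [e1, e2, Real.sq_sqrt hs.le]
  have : 0 < √(ε * t) := Real.sqrt_pos.2 hs
  field_simp

lemma aux_G2 (K ε t : ℝ) (hε : 0 < ε) (ht : 0 < t) :
    HasDerivAt (fun t => 4 * K * ε ^ ((3:ℝ)/2) * (ε * t) ^ ((1:ℝ)/4))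
      (K * ε ^ ((5:ℝ)/2) * (ε * t) ^ (-(3:ℝ)/4)) t := by
  have hs : 0 < ε * t := by positivity
  have h1 : HasDerivAt (fun t => ε * t) ε t := by
    simpa using (hasDerivAt_id t).const_mul ε
  have h2 := (h1.rpow_const (p := (1:ℝ)/4) (Or.inl hs.ne')).const_mul (4 * K * ε ^ ((3:ℝ)/2))
  refine h2.congr_deriv ?_
  have e1 : ε ^ ((5:ℝ)/2) = ε ^ ((3:ℝ)/2) * ε := by
    rw [← Real.rpow_add_one hε.ne']; norm_num
  rw [e1, show (1:ℝ)/4 - 1 = -(3:ℝ)/4 by norm_num]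
  ring

/-- Derivative of the weighted difference `D ^ r * (y - ε y₀ / D)`. -/
lemma aux_F (m y₀ ε r t : ℝ) (hm : 0 < m) (hy₀ : 0 < y₀) (hε : 0 < ε) (ht : 0 < t)
    (y : ℝ → ℝ) (R : ℝ) (hd : HasDerivAt y (-(2 * m) * (y t) ^ 2 + R) t) :
    HasDerivAt (fun t => (1 + 2 * m * ε * y₀ * t) ^ r *
        (y t - ε * y₀ / (1 + 2 * m * ε * y₀ * t)))
      (-(2 * m * (y t - (r - 1) * (ε * y₀ / (1 + 2 * m * ε * y₀ * t)))) *
        ((1 + 2 * m * ε * y₀ * t) ^ r * (y t - ε * y₀ / (1 + 2 * m * ε * y₀ * t)))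
        + (1 + 2 * m * ε * y₀ * t) ^ r * R) t := by
  have hD : 0 < 1 + 2 * m * ε * y₀ * t := by positivity
  have h1 : HasDerivAt (fun t => 1 + 2 * m * ε * y₀ * t) (2 * m * ε * y₀) t := by
    simpa using ((hasDerivAt_id t).const_mul (2 * m * ε * y₀)).const_add 1
  have h2 := h1.rpow_const (p := r) (Or.inl hD.ne')
  have h3 := (hasDerivAt_const t (ε * y₀)).div h1 hD.ne'
  refine (h2.mul (hd.sub h3)).congr_deriv ?_
  rw [Real.rpow_sub_one hD.ne']
  generalize (1 + 2 * m * ε * y₀ * t) ^ r = P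
  simp only [Pi.sub_apply, Pi.div_apply]
  generalize hDD : 1 + 2 * m * ε * y₀ * t = D at *
  field_simp
  ring

theorem aux_main (m y₀ Ybar A B : ℝ) (hm : 0 < m) (hy₀ : 0 < y₀) (hY : 0 ≤ Ybar)
    (hA : 1 ≤ A) (hA' : 2 * m * y₀ ≤ A) (hB0 : 0 < B) (hB : B ≤ 1) (hB' : B ≤ 2 * m * y₀)
    (ε : ℝ) (hε : 0 < ε) (hsmall : 4 * (Real.pi * A * Ybar) * ε ^ ((1:ℝ)/2) ≤ y₀)
    (y YR : ℝ → ℝ) (hc : ContinuousOn y (Ici 0)) (hn : ∀ t, 0 ≤ t → 0 ≤ y t)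
    (h0 : y 0 = ε * y₀)
    (hd : ∀ t, 0 < t → HasDerivAt y (-(2 * m) * (y t) ^ 2 + YR t) t)
    (hR : ∀ t, 0 < t →
          |YR t| ≤ Ybar * ε ^ ((5:ℝ)/2) * (1 + ε * t) ^ (-(2:ℝ)) * (ε * t) ^ (-(1:ℝ)/2))
    (t : ℝ) (ht : 0 < t) :
    |y t - ε * y₀ / (1 + 2 * m * ε * y₀ * t)| ≤
            (4 * A ^ ((7:ℝ)/4) / B ^ ((7:ℝ)/4)) * Ybar * (ε / (1 + ε * t)) ^ ((3:ℝ)/2) := by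
  have hDpos : ∀ t, 0 ≤ t → 0 < 1 + 2 * m * ε * y₀ * t := fun t ht => by positivity
  have hDle : ∀ t, 0 ≤ t → 1 + 2 * m * ε * y₀ * t ≤ A * (1 + ε * t) := fun t ht => by
    have : 0 ≤ ε * t := by positivity
    nlinarith
  have hDge : ∀ t, 0 ≤ t → B * (1 + ε * t) ≤ 1 + 2 * m * ε * y₀ * t := fun t ht => by
    have : 0 ≤ ε * t := by positivity
    nlinarith
  have hFc : ∀ r : ℝ, ContinuousOn (fun t => (1 + 2 * m * ε * y₀ * t) ^ r *
        (y t - ε * y₀ / (1 + 2 * m * ε * y₀ * t))) (Ici 0) := by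
    intro r
    have hDc : ContinuousOn (fun t => 1 + 2 * m * ε * y₀ * t) (Ici 0) := by fun_prop
    exact (hDc.rpow_const (fun x hx => Or.inl (hDpos x hx).ne')).mul
      (hc.sub (continuousOn_const.div hDc (fun x hx => (hDpos x hx).ne')))
  have hF0 : ∀ r : ℝ, (fun t => (1 + 2 * m * ε * y₀ * t) ^ r *
        (y t - ε * y₀ / (1 + 2 * m * ε * y₀ * t))) 0 = 0 := by
    intro r; simp [h0]
  have step1 := aux_comp
    (fun t => (1 + 2 * m * ε * y₀ * t) ^ (1:ℝ) * (y t - ε * y₀ / (1 + 2 * m * ε * y₀ * t)))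
    (fun t => 2 * (A * Ybar) * ε ^ ((3:ℝ)/2) * Real.arctan (√(ε * t)))
    (fun t => 2 * m * (y t - ((1:ℝ) - 1) * (ε * y₀ / (1 + 2 * m * ε * y₀ * t))))
    (fun t => (1 + 2 * m * ε * y₀ * t) ^ (1:ℝ) * YR t)
    (fun t => A * Ybar * ε ^ ((5:ℝ)/2) * (1 + ε * t)⁻¹ * (ε * t) ^ (-(1:ℝ)/2))
    (hFc _)
    (by fun_prop) (hF0 1)
    (fun t ht => by
      have := Real.arctan_nonneg.2 (Real.sqrt_nonneg (ε * t))
      positivity)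
    (fun t ht => aux_F m y₀ ε 1 t hm hy₀ hε ht y (YR t) (hd t ht))
    (fun t ht => aux_G1 (A * Ybar) ε t hε ht)
    (fun t ht => by
      have := hn t ht.le
      simp only [sub_self, zero_mul, sub_zero]
      positivity)
    (fun t ht => by
      have h1 := hDpos t ht.le
      have hs : 0 < 1 + ε * t := by positivity
      rw [abs_mul, Real.rpow_one, abs_of_pos h1]
      calc _ ≤ (A * (1 + ε * t)) * (Ybar * ε ^ ((5:ℝ)/2) * (1 + ε * t) ^ (-(2:ℝ)) *
            (ε * t) ^ (-(1:ℝ)/2)) := by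
            gcongr
            · exact hDle t ht.le
            · exact hR t ht
        _ = _ := by
            have : (1 + ε * t) ^ (-(2:ℝ)) = ((1 + ε * t) ^ 2)⁻¹ := by
              rw [Real.rpow_neg hs.le]; norm_num
            rw [this]
            field_simp)
  have hlow : ∀ t, 0 < t → 3 / 4 * (ε * y₀ / (1 + 2 * m * ε * y₀ * t)) ≤ y t := by
    intro t ht
    have h1 := hDpos t ht.le
    have h2 := step1 t ht.le
    simp only [Real.rpow_one] at h2
    have h3 : 2 * (A * Ybar) * ε ^ ((3:ℝ)/2) * Real.arctan (√(ε * t)) ≤ ε * y₀ / 4 := by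
      have e1 : ε ^ ((3:ℝ)/2) = ε ^ ((1:ℝ)/2) * ε := by
        rw [← Real.rpow_add_one hε.ne']; norm_num
      have h4 := (Real.arctan_lt_pi_div_two (√(ε * t))).le
      calc _ ≤ 2 * (A * Ybar) * ε ^ ((3:ℝ)/2) * (Real.pi / 2) := by gcongr
        _ = ε / 4 * (4 * (Real.pi * A * Ybar) * ε ^ ((1:ℝ)/2)) := by rw [e1]; ring
        _ ≤ ε / 4 * y₀ := by gcongr
        _ = _ := by ring
    have h5 := (abs_le.1 (h2.trans h3)).1
    have h6 : (1 + 2 * m * ε * y₀ * t) * (ε * y₀ / (1 + 2 * m * ε * y₀ * t)) = ε * y₀ := by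
      field_simp
    refine le_of_mul_le_mul_left ?_ h1
    linarith
  have step2 := aux_comp
    (fun t => (1 + 2 * m * ε * y₀ * t) ^ ((7:ℝ)/4) * (y t - ε * y₀ / (1 + 2 * m * ε * y₀ * t)))
    (fun t => 4 * (A ^ ((7:ℝ)/4) * Ybar) * ε ^ ((3:ℝ)/2) * (ε * t) ^ ((1:ℝ)/4))
    (fun t => 2 * m * (y t - (((7:ℝ)/4) - 1) * (ε * y₀ / (1 + 2 * m * ε * y₀ * t))))
    (fun t => (1 + 2 * m * ε * y₀ * t) ^ ((7:ℝ)/4) * YR t)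
    (fun t => A ^ ((7:ℝ)/4) * Ybar * ε ^ ((5:ℝ)/2) * (ε * t) ^ (-(3:ℝ)/4))
    (hFc _)
    ((ContinuousOn.rpow_const (by fun_prop) (fun x hx => Or.inr (by norm_num))).const_mul _)
    (hF0 _)
    (fun t ht => by positivity)
    (fun t ht => aux_F m y₀ ε ((7:ℝ)/4) t hm hy₀ hε ht y (YR t) (hd t ht))
    (fun t ht => aux_G2 (A ^ ((7:ℝ)/4) * Ybar) ε t hε ht)
    (fun t ht => by
      have := hlow t ht
      have h2 : 0 ≤ y t - ((7:ℝ)/4 - 1) * (ε * y₀ / (1 + 2 * m * ε * y₀ * t)) := by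
        linarith
      positivity)
    (fun t ht => by
      have h1 := hDpos t ht.le
      have hst : 0 < ε * t := by positivity
      have hs : 0 < 1 + ε * t := by positivity
      rw [abs_mul, abs_of_pos (Real.rpow_pos_of_pos h1 _)]
      have e1 : (1 + ε * t) ^ (-(1:ℝ)/4) ≤ (ε * t) ^ (-(1:ℝ)/4) :=
        Real.rpow_le_rpow_of_nonpos hst (by linarith) (by norm_num)
      calc _ ≤ (A * (1 + ε * t)) ^ ((7:ℝ)/4) * (Ybar * ε ^ ((5:ℝ)/2) * (1 + ε * t) ^ (-(2:ℝ)) *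
            (ε * t) ^ (-(1:ℝ)/2)) := by
            gcongr
            · exact hDle t ht.le
            · exact hR t ht
        _ = A ^ ((7:ℝ)/4) * Ybar * ε ^ ((5:ℝ)/2) * ((1 + ε * t) ^ (-(1:ℝ)/4) *
            (ε * t) ^ (-(1:ℝ)/2)) := by
            have : (1 + ε * t) ^ (-(1:ℝ)/4) = (1 + ε * t) ^ ((7:ℝ)/4) * (1 + ε * t) ^ (-(2:ℝ)) := by
              rw [← Real.rpow_add hs]; norm_num
            rw [this, Real.mul_rpow (by positivity) hs.le]
            ring
        _ ≤ A ^ ((7:ℝ)/4) * Ybar * ε ^ ((5:ℝ)/2) * ((ε * t) ^ (-(1:ℝ)/4) *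
            (ε * t) ^ (-(1:ℝ)/2)) := by gcongr
        _ = _ := by
            rw [← Real.rpow_add hst]; norm_num)
  have h2 := step2 t ht.le
  have h1 := hDpos t ht.le
  have hst : 0 < ε * t := by positivity
  have hs : 0 < 1 + ε * t := by positivity
  beta_reduce at h2
  rw [abs_mul, abs_of_pos (Real.rpow_pos_of_pos h1 _)] at h2
  have hBp : 0 < B ^ ((7:ℝ)/4) := by positivity
  have h3 : B ^ ((7:ℝ)/4) * (1 + ε * t) ^ ((7:ℝ)/4) ≤ (1 + 2 * m * ε * y₀ * t) ^ ((7:ℝ)/4) := by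
    rw [← Real.mul_rpow hB0.le hs.le]
    exact Real.rpow_le_rpow (by positivity) (hDge t ht.le) (by norm_num)
  have h4 : (ε * t) ^ ((1:ℝ)/4) ≤ (1 + ε * t) ^ ((1:ℝ)/4) :=
    Real.rpow_le_rpow hst.le (by linarith) (by norm_num)
  have h5 : (1 + ε * t) ^ ((7:ℝ)/4) = (1 + ε * t) ^ ((3:ℝ)/2) * (1 + ε * t) ^ ((1:ℝ)/4) := by
    rw [← Real.rpow_add hs]; norm_num
  have hpos : 0 < B ^ ((7:ℝ)/4) * (1 + ε * t) ^ ((7:ℝ)/4) := by positivity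
  refine le_of_mul_le_mul_left ?_ hpos
  calc _ ≤ (1 + 2 * m * ε * y₀ * t) ^ ((7:ℝ)/4) *
        |y t - ε * y₀ / (1 + 2 * m * ε * y₀ * t)| := by gcongr
    _ ≤ _ := h2
    _ ≤ 4 * (A ^ ((7:ℝ)/4) * Ybar) * ε ^ ((3:ℝ)/2) * (1 + ε * t) ^ ((1:ℝ)/4) := by gcongr
    _ = _ := by
      rw [Real.div_rpow hε.le hs.le, h5]
      have : 0 < (1 + ε * t) ^ ((3:ℝ)/2) := by positivity
      field_simp

/-- Decay lemma for the squared modulus `y = |z₁|²` of the discrete oscillation amplitude: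
a nonnegative scalar ODE with quadratic damping `y' = -2m y² + Y_R` and a decaying source. -/
theorem stmt_0 (m y₀ Ybar : ℝ) (hm : 0 < m) (hy₀ : 0 < y₀) (hY : 0 ≤ Ybar) :
    ∃ ε₀ > (0:ℝ), ∃ c > (0:ℝ), ∀ ε : ℝ, 0 < ε → ε ≤ ε₀ →
      ∀ y YR : ℝ → ℝ,
        ContinuousOn y (Ici 0) →
        (∀ t, 0 ≤ t → 0 ≤ y t) →
        y 0 = ε * y₀ →
        (∀ t, 0 < t → HasDerivAt y (-(2 * m) * (y t) ^ 2 + YR t) t) →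
        (∀ t, 0 < t →
          |YR t| ≤ Ybar * ε ^ ((5:ℝ)/2) * (1 + ε * t) ^ (-(2:ℝ)) * (ε * t) ^ (-(1:ℝ)/2)) →
        ∀ t, 0 < t →
          |y t - ε * y₀ / (1 + 2 * m * ε * y₀ * t)| ≤
            c * Ybar * (ε / (1 + ε * t)) ^ ((3:ℝ)/2) := by
  have ha : 0 < 2 * m * y₀ := by positivity
  obtain ⟨A, hAdef⟩ : ∃ A, A = max 1 (2 * m * y₀) := ⟨_, rfl⟩
  obtain ⟨B, hBdef⟩ : ∃ B, B = min 1 (2 * m * y₀) := ⟨_, rfl⟩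
  have hA : 1 ≤ A := hAdef ▸ le_max_left _ _
  have hA' : 2 * m * y₀ ≤ A := hAdef ▸ le_max_right _ _
  have hB0 : 0 < B := hBdef ▸ lt_min one_pos ha
  have hB : B ≤ 1 := hBdef ▸ min_le_left _ _
  have hB' : B ≤ 2 * m * y₀ := hBdef ▸ min_le_right _ _
  have hA0 : 0 < A := by linarith
  obtain ⟨q, hq⟩ : ∃ q, q = y₀ / (4 * (Real.pi * A * Ybar) + 1) := ⟨_, rfl⟩
  have hK : 0 < 4 * (Real.pi * A * Ybar) + 1 := by positivity
  have hq0 : 0 < q := by rw [hq]; positivity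
  refine ⟨q ^ 2, by positivity, 4 * A ^ ((7:ℝ)/4) / B ^ ((7:ℝ)/4), by positivity, ?_⟩
  intro ε hε hε0 y YR hc hn h0 hd hR t ht
  refine aux_main m y₀ Ybar A B hm hy₀ hY hA hA' hB0 hB hB' ε hε ?_ y YR hc hn h0 hd hR t ht
  have h1 : ε ^ ((1:ℝ)/2) ≤ q := by
    rw [← Real.sqrt_eq_rpow]
    exact Real.sqrt_le_iff.2 ⟨hq0.le, hε0⟩
  have h2 : (4 * (Real.pi * A * Ybar) + 1) * q = y₀ := by
    rw [hq]; field_simp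
  calc _ ≤ 4 * (Real.pi * A * Ybar) * q := by gcongr
    _ ≤ y₀ := by linarith
end

section
/- Let k > 0, δ ∈ ℝ, C₀ ≥ 0, let ξ : [0,∞) → ℝ be continuous and let Z₁ : [0,∞) → ℂ be continuous with |Z₁(t)| ≤ C₀ (1+t)^{−2} for all t ≥ 0. Suppose z₁ : [0,∞) → ℂ is differentiable and satisfies z₁'(t) = ( i ξ(t) − (1−iδ) k / (2(1+kt)) ) z₁(t) + Z₁(t) for all t ≥ 0. Then the integral z_∞ := z₁(0) + ∫₀^∞ exp(−i∫₀^s ξ(τ)dτ) · (1+ks)^{(1−iδ)/2} Z₁(s) ds converges absolutely, and there exists C' > 0, depending only on C₀, k and δ, such that for all t ≥ 0: | z₁(t) − z_∞ · exp(i∫₀^t ξ(τ)dτ) · (1+kt)^{−(1−iδ)/2} | ≤ C' (1+t)^{−1}. Here (1+kt)^{w} := exp(w·log(1+kt)) for w ∈ ℂ. -/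
open Set MeasureTheory Filter

lemma aux_X (ξ : ℝ → ℝ) (hξ : ContinuousOn ξ (Ici 0)) (t : ℝ) (ht : 0 ≤ t) :
    HasDerivWithinAt (fun s : ℝ => ∫ τ in (0:ℝ)..s, ξ τ) (ξ t) (Ici 0) t := by
  have hc : Continuous (fun s : ℝ => ξ (max s 0)) :=
    hξ.comp_continuous (by fun_prop) (fun s => le_max_right s 0)
  have h1 := (hc.integral_hasStrictDerivAt 0 t).hasDerivAt.hasDerivWithinAt (s := Ici 0)
  rw [max_eq_left ht] at h1
  have key : ∀ s ∈ Ici (0:ℝ), (∫ τ in (0:ℝ)..s, ξ τ) = ∫ τ in (0:ℝ)..s, ξ (max τ 0) := by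
    intro s hs
    apply intervalIntegral.integral_congr
    intro τ hτ
    rw [uIcc_of_le hs] at hτ
    simp only [max_eq_left hτ.1]
  exact h1.congr key (key t ht)

lemma aux_L (k : ℝ) (hk : 0 < k) (t : ℝ) (ht : 0 ≤ t) :
    HasDerivWithinAt (fun s : ℝ => Real.log (1 + k * s)) (k / (1 + k * t)) (Ici 0) t := by
  have hp : 1 + k * t ≠ 0 := by positivity
  have h : HasDerivAt (fun s : ℝ => 1 + k * s) k t := by
    simpa using ((hasDerivAt_id t).const_mul k).const_add 1
  exact (h.log hp).hasDerivWithinAt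

lemma aux_tail (t : ℝ) (ht : 0 ≤ t) :
    IntegrableOn (fun s : ℝ => (1 + s) ^ (-(3/2) : ℝ)) (Ioi t) ∧
    ∫ s in Ioi t, (1 + s) ^ (-(3/2) : ℝ) = 2 * (1 + t) ^ (-(1/2) : ℝ) := by
  have hd : ∀ s ∈ Ici t, HasDerivAt (fun s : ℝ => -2 * (1 + s) ^ (-(1/2) : ℝ))
      ((1 + s) ^ (-(3/2) : ℝ)) s := by
    intro s hs
    have hs' : t ≤ s := hs
    have hp : 1 + s ≠ 0 := by linarith
    have h : HasDerivAt (fun s : ℝ => 1 + s) 1 s := (hasDerivAt_id s).const_add 1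
    have h2 := (h.rpow_const (p := (-(1/2) : ℝ)) (Or.inl hp)).const_mul (-2)
    refine h2.congr_deriv ?_
    norm_num
    ring
  have hpos : ∀ s ∈ Ioi t, 0 ≤ (1 + s) ^ (-(3/2) : ℝ) := by
    intro s hs
    have hs' : t < s := hs
    exact Real.rpow_nonneg (by linarith) _
  have hlim : Tendsto (fun s : ℝ => -2 * (1 + s) ^ (-(1/2) : ℝ)) atTop (nhds 0) := by
    have h := (tendsto_rpow_neg_atTop (y := 1/2) (by norm_num)).comp
      (tendsto_atTop_add_const_left atTop (1:ℝ) tendsto_id)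
    simpa using h.const_mul (-2)
  refine ⟨integrableOn_Ioi_deriv_of_nonneg' hd hpos hlim, ?_⟩
  rw [integral_Ioi_of_hasDerivAt_of_nonneg' hd hpos hlim]
  ring

/-- Large-time asymptotics for the amplitude `z₁` of the discrete mode after the
normal-form transformation: `z₁' = (iξ(t) - (1-iδ)k/(2(1+kt))) z₁ + Z₁(t)` with
`|Z₁(t)| ≤ C₀ (1+t)⁻²`.  Here `(1+kt)^w := exp(w log(1+kt))` for complex `w`. -/
theorem stmt_1 (k δ C₀ : ℝ) (hk : 0 < k) (hC₀ : 0 ≤ C₀) :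
    ∃ C' > (0:ℝ), ∀ (ξ : ℝ → ℝ) (Z₁ z₁ : ℝ → ℂ),
      ContinuousOn ξ (Ici 0) →
      ContinuousOn Z₁ (Ici 0) →
      (∀ t : ℝ, 0 ≤ t → ‖Z₁ t‖ ≤ C₀ * (1 + t) ^ (-(2:ℝ))) →
      (∀ t : ℝ, 0 ≤ t → HasDerivWithinAt z₁
        ((Complex.I * (ξ t : ℂ)
            - (1 - Complex.I * (δ : ℂ)) * (k : ℂ) / (2 * (1 + (k : ℂ) * (t : ℂ)))) * z₁ t
          + Z₁ t) (Ici 0) t) →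
      IntegrableOn
        (fun s : ℝ => Complex.exp (-(Complex.I) * ((∫ τ in (0:ℝ)..s, ξ τ : ℝ) : ℂ)) *
          Complex.exp (((1 - Complex.I * (δ : ℂ)) / 2) * ((Real.log (1 + k * s) : ℝ) : ℂ)) *
          Z₁ s) (Ioi 0) ∧
      ∀ t : ℝ, 0 ≤ t →
        ‖z₁ t -
          (z₁ 0 + ∫ s in Ioi (0:ℝ),
              Complex.exp (-(Complex.I) * ((∫ τ in (0:ℝ)..s, ξ τ : ℝ) : ℂ)) *
                Complex.exp (((1 - Complex.I * (δ : ℂ)) / 2) *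
                  ((Real.log (1 + k * s) : ℝ) : ℂ)) * Z₁ s) *
            Complex.exp (Complex.I * ((∫ τ in (0:ℝ)..t, ξ τ : ℝ) : ℂ)) *
            Complex.exp (-((1 - Complex.I * (δ : ℂ)) / 2) *
              ((Real.log (1 + k * t) : ℝ) : ℂ))‖
          ≤ C' * (1 + t)⁻¹ := by
  set A : ℝ := C₀ * (1 + k) ^ (1/2 : ℝ) with hA
  have hA0 : 0 ≤ A := by positivity
  refine ⟨A * 2 * (1 + k⁻¹) ^ (1/2 : ℝ) + 1, by positivity, ?_⟩
  intro ξ Z₁ z₁ hξ hZ hZb hz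
  set X : ℝ → ℝ := fun s => ∫ τ in (0:ℝ)..s, ξ τ with hX
  set a : ℂ := (1 - Complex.I * (δ : ℂ)) / 2 with ha
  set g : ℝ → ℂ := fun s : ℝ => Complex.exp (-(Complex.I) * (X s : ℂ)) *
          Complex.exp (a * ((Real.log (1 + k * s) : ℝ) : ℂ)) * Z₁ s with hg
  set F : ℝ → ℂ := fun s : ℝ => Complex.exp (-(Complex.I) * (X s : ℂ)) *
          Complex.exp (a * ((Real.log (1 + k * s) : ℝ) : ℂ)) with hF
  have hFd : ∀ t : ℝ, 0 ≤ t → HasDerivWithinAt F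
      (F t * (-(Complex.I) * (ξ t : ℂ) + a * ((k / (1 + k * t) : ℝ) : ℂ))) (Ici 0) t := by
    intro t ht
    have h1 := ((aux_X ξ hξ t ht).ofReal_comp.const_mul (-(Complex.I))).cexp
    have h2 := ((aux_L k hk t ht).ofReal_comp.const_mul a).cexp
    refine (h1.mul h2).congr_deriv ?_
    simp only [hF, hX]
    ring
  have hud : ∀ t : ℝ, 0 ≤ t → HasDerivWithinAt (fun s => F s * z₁ s) (g t) (Ici 0) t := by
    intro t ht
    refine ((hFd t ht).mul (hz t ht)).congr_deriv ?_
    have hp : (1 + (k:ℂ) * (t:ℂ)) ≠ 0 := by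
      have : 1 + k * t ≠ 0 := by positivity
      exact_mod_cast this
    have hgF : g t = F t * Z₁ t := rfl
    rw [hgF, ha]
    push_cast
    field_simp
    ring
  have hFn : ∀ t : ℝ, 0 ≤ t → ‖F t‖ = (1 + k * t) ^ (1/2 : ℝ) := by
    intro t ht
    have hp : 0 < 1 + k * t := by positivity
    simp only [hF, norm_mul, Complex.norm_exp, Real.rpow_def_of_pos hp]
    rw [← Real.exp_add]
    congr 1
    simp [ha]
    ring
  have hgc : ContinuousOn g (Ici 0) :=
    ContinuousOn.mul (fun t ht => (hFd t ht).continuousWithinAt) hZ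
  have hgb : ∀ s : ℝ, 0 ≤ s → ‖g s‖ ≤ A * (1 + s) ^ (-(3/2) : ℝ) := by
    intro s hs
    have hgF : g s = F s * Z₁ s := rfl
    rw [hgF, norm_mul, hFn s hs]
    have h1 : (1 + k * s) ^ (1/2 : ℝ) ≤ (1 + k) ^ (1/2 : ℝ) * (1 + s) ^ (1/2 : ℝ) := by
      rw [← Real.mul_rpow (by positivity) (by positivity)]
      apply Real.rpow_le_rpow (by positivity) _ (by norm_num)
      nlinarith
    have h2 : (1 + s) ^ (-(3/2) : ℝ) = (1 + s) ^ (1/2 : ℝ) * (1 + s) ^ (-2 : ℝ) := by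
      rw [← Real.rpow_add (by positivity)]
      norm_num
    calc _ ≤ ((1 + k) ^ (1/2 : ℝ) * (1 + s) ^ (1/2 : ℝ)) * (C₀ * (1 + s) ^ (-(2:ℝ))) :=
          mul_le_mul h1 (hZb s hs) (norm_nonneg _) (by positivity)
      _ = _ := by rw [h2, hA]; ring
  have hgi : IntegrableOn g (Ioi 0) := by
    refine Integrable.mono' ((aux_tail 0 le_rfl).1.const_mul A) ?_ ?_
    · exact (hgc.mono Ioi_subset_Ici_self).aestronglyMeasurable measurableSet_Ioi
    · exact (ae_restrict_iff' measurableSet_Ioi).2 (Eventually.of_forall fun s hs => hgb s (le_of_lt hs))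
  refine ⟨hgi, ?_⟩
  intro t ht
  have hgt : IntegrableOn g (Ioi t) := hgi.mono_set (Ioi_subset_Ioi ht)
  have hF0 : F 0 = 1 := by simp [hF, hX]
  have hftc : ∫ s in (0:ℝ)..t, g s = F t * z₁ t - F 0 * z₁ 0 := by
    refine intervalIntegral.integral_eq_sub_of_hasDerivAt_of_le (f := fun s => F s * z₁ s) ht ?_ ?_ ?_
    · exact fun s hs => ((hud s hs.1).continuousWithinAt).mono (fun x hx => hx.1)
    · exact fun s hs => (hud s hs.1.le).hasDerivAt (Ici_mem_nhds hs.1)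
    · exact (intervalIntegrable_iff_integrableOn_Ioc_of_le ht).2 (hgi.mono_set (fun x hx => hx.1))
  have hsplit : (∫ s in (0:ℝ)..t, g s) + ∫ s in Ioi t, g s = ∫ s in Ioi (0:ℝ), g s :=
    intervalIntegral.integral_interval_add_Ioi hgi hgt
  have hinv : F t * (Complex.exp (Complex.I * (X t : ℂ)) *
      Complex.exp (-a * ((Real.log (1 + k * t) : ℝ) : ℂ))) = 1 := by
    simp only [hF, ← Complex.exp_add]
    rw [← Complex.exp_zero]
    congr 1
    ring
  set E : ℂ := Complex.exp (Complex.I * (X t : ℂ)) *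
      Complex.exp (-a * ((Real.log (1 + k * t) : ℝ) : ℂ)) with hE
  have hEn : ‖E‖ = (1 + k * t) ^ (-(1/2) : ℝ) := by
    have h := congrArg norm hinv
    rw [norm_mul, hFn t ht, norm_one] at h
    rw [Real.rpow_neg (by positivity)]
    exact eq_inv_of_mul_eq_one_right h
  have hmain : z₁ t - (z₁ 0 + ∫ s in Ioi (0:ℝ), g s) * Complex.exp (Complex.I * (X t : ℂ)) *
      Complex.exp (-a * ((Real.log (1 + k * t) : ℝ) : ℂ)) = -((∫ s in Ioi t, g s) * E) := by
    rw [← hsplit, hftc, hF0, mul_assoc, ← hE]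
    linear_combination (-z₁ t) * hinv
  have htail : ‖∫ s in Ioi t, g s‖ ≤ A * (2 * (1 + t) ^ (-(1/2) : ℝ)) := by
    rw [← (aux_tail t ht).2, ← integral_const_mul]
    refine norm_integral_le_of_norm_le ((aux_tail t ht).1.const_mul A) ?_
    exact (ae_restrict_iff' measurableSet_Ioi).2
      (Eventually.of_forall fun s hs => hgb s (ht.trans (le_of_lt hs)))
  have hEb : ‖E‖ ≤ (1 + k⁻¹) ^ (1/2 : ℝ) * (1 + t) ^ (-(1/2) : ℝ) := by
    rw [hEn, Real.rpow_neg (by positivity), Real.rpow_neg (by positivity), ← div_eq_mul_inv,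
      ← Real.div_rpow (by positivity) (by positivity), ← Real.inv_rpow (by positivity)]
    apply Real.rpow_le_rpow (by positivity) _ (by norm_num)
    rw [inv_eq_one_div, div_le_div_iff₀ (by positivity) (by positivity)]
    have : (1 + k⁻¹) * (1 + k * t) = 1 + k * t + k⁻¹ + t := by
      field_simp
      ring
    rw [this]
    have : 0 < k⁻¹ := by positivity
    nlinarith [mul_nonneg hk.le ht]
  have hfin : ‖-((∫ s in Ioi t, g s) * E)‖ ≤
      (A * 2 * (1 + k⁻¹) ^ (1/2 : ℝ) + 1) * (1 + t)⁻¹ := by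
    rw [norm_neg, norm_mul]
    have hsq : (1 + t) ^ (-(1/2) : ℝ) * (1 + t) ^ (-(1/2) : ℝ) = (1 + t)⁻¹ := by
      rw [← Real.rpow_add (by positivity), ← Real.rpow_neg_one]
      norm_num
    calc _ ≤ (A * (2 * (1 + t) ^ (-(1/2) : ℝ))) *
          ((1 + k⁻¹) ^ (1/2 : ℝ) * (1 + t) ^ (-(1/2) : ℝ)) :=
          mul_le_mul htail hEb (norm_nonneg _) (by positivity)
      _ = A * 2 * (1 + k⁻¹) ^ (1/2 : ℝ) * (1 + t)⁻¹ := by rw [← hsq]; ring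
      _ ≤ _ := by
        have : 0 < (1 + t)⁻¹ := by positivity
        linarith
  rw [← hmain] at hfin
  exact hfin
end

section
/- There exists an absolute constant c > 0 such that for every ε ∈ (0,1] and every t ≥ 0 one has ∫₀^t (1+t−s)^{−3/2} · (ε/(1+εs))^{3/2} ds ≤ c (ε/(1+εt))^{3/2}. -/
theorem aux_int (t : ℝ) (ht : 0 ≤ t) :
    (∫ s in (0:ℝ)..t, (1 + s) ^ (-(3:ℝ)/2)) ≤ 2 := by
  rw [intervalIntegral.integral_comp_add_left (fun x : ℝ => x ^ (-(3:ℝ)/2)) 1]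
  rw [integral_rpow]
  · have h : (0:ℝ) ≤ (1 + t) ^ (-(3:ℝ)/2 + 1) := by positivity
    rw [add_zero, Real.one_rpow]
    norm_num at h ⊢
    linarith
  · right
    refine ⟨by norm_num, ?_⟩
    rw [Set.uIcc_of_le (by linarith)]
    intro h
    linarith [h.1]

theorem aux_int2 (t : ℝ) (ht : 0 ≤ t) :
    (∫ s in (0:ℝ)..t, (1 + t - s) ^ (-(3:ℝ)/2)) ≤ 2 := by
  have := intervalIntegral.integral_comp_sub_left (a := 0) (b := t)
    (fun x : ℝ => (1 + x) ^ (-(3:ℝ)/2)) t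
  simp only [sub_self, sub_zero] at this
  have h2 := aux_int t ht
  rw [← this] at h2
  simpa only [add_sub_assoc] using h2

theorem aux_two : (2:ℝ) ^ ((3:ℝ)/2) ≤ 4 := by
  calc (2:ℝ) ^ ((3:ℝ)/2) ≤ (2:ℝ) ^ (2:ℝ) :=
        Real.rpow_le_rpow_of_exponent_le (by norm_num) (by norm_num)
    _ = 4 := by norm_num

theorem aux_inv (x : ℝ) (hx : 0 < x) : x ^ (-(3:ℝ)/2) = (1 / x) ^ ((3:ℝ)/2) := by
  rw [one_div, Real.inv_rpow hx.le, neg_div, Real.rpow_neg hx.le]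

theorem aux_pt (ε t s : ℝ) (hε : 0 < ε) (hε1 : ε ≤ 1) (hs : 0 ≤ s) (hst : s ≤ t) :
    (1 + t - s) ^ (-(3:ℝ)/2) * (ε / (1 + ε * s)) ^ ((3:ℝ)/2) ≤
      4 * (ε / (1 + ε * t)) ^ ((3:ℝ)/2) *
        ((1 + t - s) ^ (-(3:ℝ)/2) + (1 + s) ^ (-(3:ℝ)/2)) := by
  have ht : 0 ≤ t := hs.trans hst
  have hx : 0 < 1 + t - s := by linarith
  have h1 : 0 < 1 + ε * s := by positivity
  have h2 : 0 < 1 + ε * t := by positivity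
  have hA : 0 ≤ (1 + t - s) ^ (-(3:ℝ)/2) := by positivity
  have hB : 0 ≤ (1 + s) ^ (-(3:ℝ)/2) := by positivity
  have hw : 0 ≤ (ε / (1 + ε * t)) ^ ((3:ℝ)/2) := by positivity
  have key : ∀ z : ℝ, 0 ≤ z → z ≤ 2 * (ε / (1 + ε * t)) →
      z ^ ((3:ℝ)/2) ≤ 4 * (ε / (1 + ε * t)) ^ ((3:ℝ)/2) := by
    intro z hz h
    calc z ^ ((3:ℝ)/2) ≤ (2 * (ε / (1 + ε * t))) ^ ((3:ℝ)/2) :=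
          Real.rpow_le_rpow hz h (by norm_num)
      _ = 2 ^ ((3:ℝ)/2) * (ε / (1 + ε * t)) ^ ((3:ℝ)/2) :=
          Real.mul_rpow (by norm_num) (by positivity)
      _ ≤ _ := mul_le_mul_of_nonneg_right aux_two hw
  by_cases h : 1 + ε * t ≤ 2 * (1 + ε * s)
  · have h3 := key (ε / (1 + ε * s)) (by positivity) (by
      rw [← mul_div_assoc, div_le_div_iff₀ h1 h2]
      nlinarith)
    nlinarith [mul_le_mul_of_nonneg_left h3 hA, mul_nonneg hw hB]
  · push Not at h
    have h3 := key (1 / (1 + t - s)) (by positivity) (by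
      rw [← mul_div_assoc, div_le_div_iff₀ hx h2]
      nlinarith)
    rw [← aux_inv _ hx] at h3
    have h4 : (ε / (1 + ε * s)) ^ ((3:ℝ)/2) ≤ (1 + s) ^ (-(3:ℝ)/2) := by
      rw [aux_inv _ (by linarith)]
      apply Real.rpow_le_rpow (by positivity) _ (by norm_num)
      rw [div_le_div_iff₀ h1 (by linarith)]
      nlinarith
    have h5 := mul_le_mul h3 h4 (by positivity) (by positivity)
    nlinarith [mul_nonneg hw hA]

/-- Convolution inequality behind the Duhamel estimate for the continuous-spectrum
component: `∫₀ᵗ (1+t-s)^{-3/2} (ε/(1+εs))^{3/2} ds ≤ c (ε/(1+εt))^{3/2}`. -/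
theorem stmt_2 : ∃ c > (0:ℝ), ∀ ε : ℝ, 0 < ε → ε ≤ 1 → ∀ t : ℝ, 0 ≤ t →
    (∫ s in (0:ℝ)..t, (1 + t - s) ^ (-(3:ℝ)/2) * (ε / (1 + ε * s)) ^ ((3:ℝ)/2))
      ≤ c * (ε / (1 + ε * t)) ^ ((3:ℝ)/2) := by
  refine ⟨16, by norm_num, ?_⟩
  intro ε hε hε1 t ht
  have hc1 : ContinuousOn (fun s : ℝ => (1 + t - s) ^ (-(3:ℝ)/2)) (Set.uIcc 0 t) := by
    rw [Set.uIcc_of_le ht]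
    refine ContinuousOn.rpow_const (by fun_prop) ?_
    intro s hs
    left
    have := hs.2
    intro h0
    linarith
  have hc2 : ContinuousOn (fun s : ℝ => (1 + s) ^ (-(3:ℝ)/2)) (Set.uIcc 0 t) := by
    rw [Set.uIcc_of_le ht]
    refine ContinuousOn.rpow_const (by fun_prop) ?_
    intro s hs
    left
    have := hs.1
    intro h0
    linarith
  have hc3 : ContinuousOn (fun s : ℝ => (ε / (1 + ε * s)) ^ ((3:ℝ)/2)) (Set.uIcc 0 t) := by
    rw [Set.uIcc_of_le ht]
    refine ContinuousOn.rpow_const (ContinuousOn.div (by fun_prop) (by fun_prop) ?_) ?_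
    · intro s hs
      have := hs.1
      positivity
    · intro s hs
      right
      norm_num
  have hw : 0 ≤ (ε / (1 + ε * t)) ^ ((3:ℝ)/2) := by positivity
  calc _ ≤ ∫ s in (0:ℝ)..t, 4 * (ε / (1 + ε * t)) ^ ((3:ℝ)/2) *
        ((1 + t - s) ^ (-(3:ℝ)/2) + (1 + s) ^ (-(3:ℝ)/2)) := by
        apply intervalIntegral.integral_mono_on ht
        · exact (hc1.mul hc3).intervalIntegrable
        · exact (continuousOn_const.mul (hc1.add hc2)).intervalIntegrable
        · intro s hs
          exact aux_pt ε t s hε hε1 hs.1 hs.2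
    _ = 4 * (ε / (1 + ε * t)) ^ ((3:ℝ)/2) * ((∫ s in (0:ℝ)..t, (1 + t - s) ^ (-(3:ℝ)/2)) +
          ∫ s in (0:ℝ)..t, (1 + s) ^ (-(3:ℝ)/2)) := by
        rw [intervalIntegral.integral_const_mul,
          intervalIntegral.integral_add hc1.intervalIntegrable hc2.intervalIntegrable]
    _ ≤ _ := by nlinarith [aux_int t ht, aux_int2 t ht]
end

section
/- (Cubic Poincaré normal form.) Let ξ ∈ ℝ ∖ {0} and Z₂₀, Z₁₁, Z₀₂, Z₃₀, Z₂₁, Z₁₂, Z₀₃ ∈ ℂ. Set c₂₀ = iZ₂₀/ξ, c₁₁ = −iZ₁₁/ξ, c₀₂ = −iZ₀₂/(3ξ), and iK = Z₂₁ + (i/ξ)Z₂₀Z₁₁ − (i/ξ)|Z₁₁|² − (2i/(3ξ))|Z₀₂|². Then there exist c₃₀, c₁₂, c₀₃ ∈ ℂ and a constant C > 0, depending only on ξ and on the coefficients Z_{jk}, with the following property: whenever z : [0,T] → ℂ is differentiable, |z(t)| ≤ 1 for all t, and ż(t) = iξ z + Z₂₀z² + Z₁₁ z z̄ + Z₀₂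 z̄² + Z₃₀ z³ + Z₂₁ z² z̄ + Z₁₂ z z̄² + Z₀₃ z̄³ + R(t) for a continuous R : [0,T] → ℂ, the function z₁ := z + c₂₀z² + c₁₁ z z̄ + c₀₂ z̄² + c₃₀ z³ + c₁₂ z z̄² + c₀₃ z̄³ satisfies, for all t ∈ [0,T], | ż₁(t) − iξ z₁(t) − iK |z₁(t)|² z₁(t) | ≤ C ( |R(t)| + |z(t)|⁴ ). -/
open Set

/-- The transformed variable `z₁` of the cubic Poincaré normal form, with
`c₂₀ = iZ₂₀/ξ`, `c₁₁ = -iZ₁₁/ξ`, `c₀₂ = -iZ₀₂/(3ξ)` and free cubic coefficients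
`c₃₀, c₁₂, c₀₃`. -/
noncomputable def normalFormVar (ξ : ℝ) (Z20 Z11 Z02 c30 c12 c03 : ℂ)
    (z : ℝ → ℂ) (s : ℝ) : ℂ :=
  z s + (Complex.I * Z20 / (ξ : ℂ)) * z s ^ 2
      + (-(Complex.I) * Z11 / (ξ : ℂ)) * (z s * (starRingEnd ℂ) (z s))
      + (-(Complex.I) * Z02 / (3 * (ξ : ℂ))) * (starRingEnd ℂ) (z s) ^ 2
      + c30 * z s ^ 3 + c12 * (z s * (starRingEnd ℂ) (z s) ^ 2)
      + c03 * (starRingEnd ℂ) (z s) ^ 3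

open Asymptotics

theorem nf_identity (a z w r s c20 c11 c02 c30 c12 c03 Z20 Z11 Z02 Z30 Z21 Z12 Z03
    Y20 Y11 Y02 F3 G3 K h k : ℂ)
    (h20 : a * c20 + Z20 = 0) (h11 : -a * c11 + Z11 = 0) (h02 : -3 * a * c02 + Z02 = 0)
    (h30 : 2 * a * c30 + (Z30 + 2 * c20 * Z20 + c11 * Y02) = 0)
    (h12 : -2 * a * c12 + (Z12 + 2 * c20 * Z02 + c11 * (Z11 + Y20) + 2 * c02 * Y11) = 0)
    (h03 : -4 * a * c03 + (Z03 + c11 * Z02 + 2 * c02 * Y20) = 0)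
    (hK : Z21 + 2 * c20 * Z11 + c11 * (Z20 + Y11) + 2 * c02 * Y02 = K)
    (hF : F3 = Z30 * z ^ 3 + Z21 * (z ^ 2 * w) + Z12 * (z * w ^ 2) + Z03 * w ^ 3)
    (hh : h = c20 * z ^ 2 + c11 * (z * w) + c02 * w ^ 2
      + (c30 * z ^ 3 + c12 * (z * w ^ 2) + c03 * w ^ 3))
    (f g F2 G2 : ℂ) (hF2 : F2 = Z20 * z ^ 2 + Z11 * (z * w) + Z02 * w ^ 2)
    (hG2 : G2 = Y20 * w ^ 2 + Y11 * (w * z) + Y02 * z ^ 2)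
    (hf : f = a * z + F2 + F3 + r) (hg : g = -a * w + G2 + G3 + s) :
    (f + c20 * (2 * z * f) + c11 * (f * w + z * g) + c02 * (2 * w * g)
      + c30 * (3 * z ^ 2 * f) + c12 * (f * w ^ 2 + z * (2 * w * g)) + c03 * (3 * w ^ 2 * g))
      - a * (z + h) - K * ((z + h) * (w + k)) * (z + h)
    = (1 + (2 * c20 * z + c11 * w) + (3 * c30 * z ^ 2 + c12 * w ^ 2)) * r
      + ((c11 * z + 2 * c02 * w) + (2 * c12 * (z * w) + 3 * c03 * w ^ 2)) * s
      + ((2 * c20 * z + c11 * w) * F3 + (c11 * z + 2 * c02 * w) * G3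
        + (3 * c30 * z ^ 2 + c12 * w ^ 2) * (F2 + F3)
        + (2 * c12 * (z * w) + 3 * c03 * w ^ 2) * (G2 + G3)
        - K * (z ^ 2 * k + (2 * z * h + h ^ 2) * (w + k))) := by
  have e : f - a * z - F2 - F3 - r = 0 := by rw [hf]; ring
  subst hf hg
  have e1 : F3 + F2 + (2 * c20 * z + c11 * w) * (a * z + F2)
      + (c11 * z + 2 * c02 * w) * (-a * w + G2)
      + (3 * c30 * z ^ 2 + c12 * w ^ 2) * (a * z)
      + (2 * c12 * (z * w) + 3 * c03 * w ^ 2) * (-a * w) - a * h - K * (z ^ 2 * w) = 0 := by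
    subst hF hh hF2 hG2
    linear_combination h20 * z ^ 2 + h11 * (z * w) + h02 * w ^ 2 + h30 * z ^ 3
      + h12 * (z * w ^ 2) + h03 * w ^ 3 + hK * (z ^ 2 * w)
  linear_combination e1

/-- `F = O(|z|^k)` on the closed unit disc. -/
def BO (k : ℕ) (F : ℂ → ℂ) : Prop := ∃ C : ℝ, 0 ≤ C ∧ ∀ z : ℂ, ‖z‖ ≤ 1 → ‖F z‖ ≤ C * ‖z‖ ^ k

theorem BO.add {k : ℕ} {F G : ℂ → ℂ} (hF : BO k F) (hG : BO k G) :
    BO k (fun z => F z + G z) := by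
  obtain ⟨C, hC, h⟩ := hF
  obtain ⟨D, hD, h'⟩ := hG
  refine ⟨C + D, by positivity, fun z hz => (norm_add_le _ _).trans ?_⟩
  have := h z hz
  have := h' z hz
  linarith

theorem BO.sub {k : ℕ} {F G : ℂ → ℂ} (hF : BO k F) (hG : BO k G) :
    BO k (fun z => F z - G z) := by
  obtain ⟨C, hC, h⟩ := hF
  obtain ⟨D, hD, h'⟩ := hG
  refine ⟨C + D, by positivity, fun z hz => (norm_sub_le _ _).trans ?_⟩
  have := h z hz
  have := h' z hz
  linarith

theorem BO.mul {k l m : ℕ} {F G : ℂ → ℂ} (hF : BO k F) (hG : BO l G) (hm : m ≤ k + l) :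
    BO m (fun z => F z * G z) := by
  obtain ⟨C, hC, h⟩ := hF
  obtain ⟨D, hD, h'⟩ := hG
  refine ⟨C * D, by positivity, fun z hz => ?_⟩
  rw [norm_mul]
  calc ‖F z‖ * ‖G z‖ ≤ (C * ‖z‖ ^ k) * (D * ‖z‖ ^ l) :=
        mul_le_mul (h z hz) (h' z hz) (norm_nonneg _) (by positivity)
    _ = C * D * ‖z‖ ^ (k + l) := by ring
    _ ≤ C * D * ‖z‖ ^ m :=
        mul_le_mul_of_nonneg_left (pow_le_pow_of_le_one (norm_nonneg _) hz hm) (by positivity)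

theorem BO.mono {k m : ℕ} {F : ℂ → ℂ} (hF : BO k F) (hm : m ≤ k) : BO m F := by
  obtain ⟨C, hC, h⟩ := hF
  exact ⟨C, hC, fun z hz => (h z hz).trans
    (mul_le_mul_of_nonneg_left (pow_le_pow_of_le_one (norm_nonneg _) hz hm) hC)⟩

theorem BO.const (c : ℂ) : BO 0 (fun _ => c) := ⟨‖c‖, norm_nonneg _, fun z _ => by simp⟩

theorem BO.cmul {k : ℕ} {F : ℂ → ℂ} (c : ℂ) (hF : BO k F) : BO k (fun z => c * F z) :=
  (BO.const c).mul hF (by omega)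

theorem BO.id : BO 1 (fun z => z) := ⟨1, by norm_num, fun z _ => by simp⟩

theorem BO.conj {k : ℕ} {F : ℂ → ℂ} (hF : BO k F) : BO k (fun z => (starRingEnd ℂ) (F z)) := by
  obtain ⟨C, hC, h⟩ := hF
  exact ⟨C, hC, fun z hz => by simpa using h z hz⟩

theorem BO.pow {k : ℕ} {F : ℂ → ℂ} (hF : BO k F) (n : ℕ) : BO (k * n) (fun z => F z ^ n) := by
  obtain ⟨C, hC, h⟩ := hF
  refine ⟨C ^ n, by positivity, fun z hz => ?_⟩
  rw [norm_pow, pow_mul, ← mul_pow]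
  exact pow_le_pow_left₀ (norm_nonneg _) (h z hz) n

theorem BO.quad (a b c : ℂ) :
    BO 2 (fun z => a * z ^ 2 + b * (z * (starRingEnd ℂ) z) + c * (starRingEnd ℂ) z ^ 2) :=
  (((BO.id.pow 2).cmul a).add ((BO.id.mul BO.id.conj (by omega)).cmul b)).add
    ((BO.id.conj.pow 2).cmul c)

theorem BO.cubic (a b c d : ℂ) :
    BO 3 (fun z => a * z ^ 3 + b * (z ^ 2 * (starRingEnd ℂ) z)
      + c * (z * (starRingEnd ℂ) z ^ 2) + d * (starRingEnd ℂ) z ^ 3) :=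
  ((((BO.id.pow 3).cmul a).add (((BO.id.pow 2).mul BO.id.conj (by omega)).cmul b)).add
    ((BO.id.mul (BO.id.conj.pow 2) (by omega)).cmul c)).add
    ((BO.id.conj.pow 3).cmul d)

theorem BO.lin (a b : ℂ) : BO 1 (fun z => a * z + b * (starRingEnd ℂ) z) :=
  (BO.id.cmul a).add (BO.id.conj.cmul b)

/-- Cubic Poincaré normal form: a degree-three polynomial change of variables removes all
nonresonant quadratic and cubic monomials from `ż = iξz + (quadratic) + (cubic) + R`,
leaving only the resonant term `iK|z₁|²z₁` with
`iK = Z₂₁ + (i/ξ)Z₂₀Z₁₁ - (i/ξ)|Z₁₁|² - (2i/(3ξ))|Z₀₂|²`,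
up to a remainder bounded by `C(|R| + |z|⁴)`. -/
theorem stmt_4 (ξ : ℝ) (hξ : ξ ≠ 0) (Z20 Z11 Z02 Z30 Z21 Z12 Z03 : ℂ) :
    ∃ (c30 c12 c03 : ℂ) (C : ℝ), 0 < C ∧
      ∀ (T : ℝ) (z R : ℝ → ℂ),
        ContinuousOn R (Icc 0 T) →
        (∀ t ∈ Icc (0:ℝ) T, ‖z t‖ ≤ 1) →
        (∀ t ∈ Icc (0:ℝ) T, HasDerivWithinAt z
          (Complex.I * (ξ : ℂ) * z t + Z20 * z t ^ 2
            + Z11 * (z t * (starRingEnd ℂ) (z t)) + Z02 * (starRingEnd ℂ) (z t) ^ 2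
            + Z30 * z t ^ 3 + Z21 * (z t ^ 2 * (starRingEnd ℂ) (z t))
            + Z12 * (z t * (starRingEnd ℂ) (z t) ^ 2) + Z03 * (starRingEnd ℂ) (z t) ^ 3
            + R t) (Icc 0 T) t) →
        ∀ t ∈ Icc (0:ℝ) T,
          ∃ d : ℂ,
            HasDerivWithinAt (normalFormVar ξ Z20 Z11 Z02 c30 c12 c03 z) d (Icc 0 T) t ∧
            ‖d - Complex.I * (ξ : ℂ) * normalFormVar ξ Z20 Z11 Z02 c30 c12 c03 z t
               - (Z21 + Complex.I / (ξ : ℂ) * (Z20 * Z11)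
                   - Complex.I / (ξ : ℂ) * ((‖Z11‖ ^ 2 : ℝ) : ℂ)
                   - 2 * Complex.I / (3 * (ξ : ℂ)) * ((‖Z02‖ ^ 2 : ℝ) : ℂ))
                 * ((‖normalFormVar ξ Z20 Z11 Z02 c30 c12 c03 z t‖ ^ 2 : ℝ) : ℂ)
                 * normalFormVar ξ Z20 Z11 Z02 c30 c12 c03 z t‖
              ≤ C * (‖R t‖ + ‖z t‖ ^ 4) := by
  
  have hx : (ξ : ℂ) ≠ 0 := by exact_mod_cast hξ
  have hI : Complex.I ≠ 0 := Complex.I_ne_zero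
  have hI2 : Complex.I ^ 2 = -1 := Complex.I_sq
  set a : ℂ := Complex.I * (ξ : ℂ) with ha
  have ha0 : a ≠ 0 := mul_ne_zero hI hx
  have hca : (starRingEnd ℂ) a = -a := by simp [ha]
  obtain ⟨c20, hc20⟩ : ∃ c, c = Complex.I * Z20 / (ξ : ℂ) := ⟨_, rfl⟩
  obtain ⟨c11, hc11⟩ : ∃ c, c = -(Complex.I) * Z11 / (ξ : ℂ) := ⟨_, rfl⟩
  obtain ⟨c02, hc02⟩ : ∃ c, c = -(Complex.I) * Z02 / (3 * (ξ : ℂ)) := ⟨_, rfl⟩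
  obtain ⟨Y20, hY20⟩ : ∃ c, c = (starRingEnd ℂ) Z20 := ⟨_, rfl⟩
  obtain ⟨Y11, hY11⟩ : ∃ c, c = (starRingEnd ℂ) Z11 := ⟨_, rfl⟩
  obtain ⟨Y02, hY02⟩ : ∃ c, c = (starRingEnd ℂ) Z02 := ⟨_, rfl⟩
  obtain ⟨K, hKd⟩ : ∃ K, K = (Z21 + Complex.I / (ξ : ℂ) * (Z20 * Z11)
                   - Complex.I / (ξ : ℂ) * ((‖Z11‖ ^ 2 : ℝ) : ℂ)
                   - 2 * Complex.I / (3 * (ξ : ℂ)) * ((‖Z02‖ ^ 2 : ℝ) : ℂ)) := ⟨_, rfl⟩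
  have h20 : a * c20 + Z20 = 0 := by
    rw [hc20, ha]; field_simp; linear_combination Z20 * hI2
  have h11 : -a * c11 + Z11 = 0 := by
    rw [hc11, ha]; field_simp; linear_combination Z11 * hI2
  have h02 : -3 * a * c02 + Z02 = 0 := by
    rw [hc02, ha]; field_simp; linear_combination Z02 * hI2
  have hn : ∀ u : ℂ, ((‖u‖ ^ 2 : ℝ) : ℂ) = u * (starRingEnd ℂ) u := fun u => by
    rw [Complex.mul_conj, Complex.normSq_eq_norm_sq]
  have hK : Z21 + 2 * c20 * Z11 + c11 * (Z20 + Y11) + 2 * c02 * Y02 = K := by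
    rw [hKd, hn, hn, ← hY11, ← hY02, hc20, hc11, hc02]; ring
  rw [← hKd]
  obtain ⟨c30, h30⟩ : ∃ c, 2 * a * c + (Z30 + 2 * c20 * Z20 + c11 * Y02) = 0 :=
    ⟨-(Z30 + 2 * c20 * Z20 + c11 * Y02) / (2 * a), by field_simp; ring⟩
  obtain ⟨c12, h12⟩ : ∃ c, -2 * a * c
      + (Z12 + 2 * c20 * Z02 + c11 * (Z11 + Y20) + 2 * c02 * Y11) = 0 :=
    ⟨(Z12 + 2 * c20 * Z02 + c11 * (Z11 + Y20) + 2 * c02 * Y11) / (2 * a), by field_simp; ring⟩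
  obtain ⟨c03, h03⟩ : ∃ c, -4 * a * c + (Z03 + c11 * Z02 + 2 * c02 * Y20) = 0 :=
    ⟨(Z03 + c11 * Z02 + 2 * c02 * Y20) / (4 * a), by field_simp; ring⟩
  -- the pieces
  obtain ⟨F3, hF3⟩ : ∃ F : ℂ → ℂ, F = fun z => Z30 * z ^ 3 + Z21 * (z ^ 2 * (starRingEnd ℂ) z)
      + Z12 * (z * (starRingEnd ℂ) z ^ 2) + Z03 * (starRingEnd ℂ) z ^ 3 := ⟨_, rfl⟩
  obtain ⟨F2, hF2⟩ : ∃ F : ℂ → ℂ, F = fun z => Z20 * z ^ 2 + Z11 * (z * (starRingEnd ℂ) z)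
      + Z02 * (starRingEnd ℂ) z ^ 2 := ⟨_, rfl⟩
  obtain ⟨H, hH⟩ : ∃ F : ℂ → ℂ, F = fun z => c20 * z ^ 2 + c11 * (z * (starRingEnd ℂ) z)
      + c02 * (starRingEnd ℂ) z ^ 2
      + (c30 * z ^ 3 + c12 * (z * (starRingEnd ℂ) z ^ 2) + c03 * (starRingEnd ℂ) z ^ 3) :=
    ⟨_, rfl⟩
  have bF3 : BO 3 F3 := hF3 ▸ BO.cubic _ _ _ _
  have bF2 : BO 2 F2 := hF2 ▸ BO.quad _ _ _
  have bH : BO 2 H := by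
    have := (BO.quad c20 c11 c02).add ((BO.cubic c30 0 c12 c03).mono (m := 2) (by omega))
    simpa [hH] using this
  have bF23 : BO 2 (fun z => F2 z + F3 z) := bF2.add (bF3.mono (by omega))
  have bA : BO 1 (fun z => 2 * c20 * z + c11 * (starRingEnd ℂ) z) := BO.lin _ _
  have bB : BO 1 (fun z => c11 * z + 2 * c02 * (starRingEnd ℂ) z) := BO.lin _ _
  have bA2 : BO 2 (fun z => 3 * c30 * z ^ 2 + c12 * (starRingEnd ℂ) z ^ 2) := by
    simpa using BO.quad (3 * c30) 0 c12
  have bB2 : BO 2 (fun z => 2 * c12 * (z * (starRingEnd ℂ) z)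
      + 3 * c03 * (starRingEnd ℂ) z ^ 2) := by
    simpa using BO.quad 0 (2 * c12) (3 * c03)
  obtain ⟨C1, hC1, hP⟩ := ((BO.const 1).add (bA.mono (m := 0) (by omega))).add
    (bA2.mono (m := 0) (by omega))
  obtain ⟨C2, hC2, hQ⟩ := (bB.mono (m := 0) (by omega)).add (bB2.mono (m := 0) (by omega))
  obtain ⟨C3, hC3, hS⟩ := ((((bA.mul bF3 (m := 4) (by omega)).add
    (bB.mul bF3.conj (m := 4) (by omega))).add
    (bA2.mul bF23 (m := 4) (by omega))).add
    (bB2.mul bF23.conj (m := 4) (by omega))).sub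
    ((((BO.id.pow 2).mul bH.conj (m := 4) (by omega)).add
      ((((BO.id.cmul 2).mul bH (m := 3) (by omega)).add ((bH.pow 2).mono (m := 3) (by omega))).mul
        (BO.id.conj.add (bH.conj.mono (m := 1) (by omega))) (m := 4) (by omega))).cmul K)
  refine ⟨c30, c12, c03, C1 + C2 + C3 + 1, by positivity, ?_⟩
  intro T z R _ hz1 hder t ht
  have hd := hder t ht
  have hz := hz1 t ht
  have hnv : ∀ s, normalFormVar ξ Z20 Z11 Z02 c30 c12 c03 z s = z s + H (z s) := by
    intro s
    simp only [normalFormVar, hH, ← hc20, ← hc11, ← hc02]; ring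
  obtain ⟨f, hf⟩ : ∃ f, f = a * z t + F2 (z t) + F3 (z t) + R t := ⟨_, rfl⟩
  have hd' : HasDerivWithinAt z f (Icc 0 T) t := by
    refine hd.congr_deriv ?_
    rw [hf, hF2, hF3]; ring
  have hdc : HasDerivWithinAt (fun s => (starRingEnd ℂ) (z s)) ((starRingEnd ℂ) f) (Icc 0 T) t :=
    hd'.star
  have hg : (starRingEnd ℂ) f = -a * (starRingEnd ℂ) (z t) + (starRingEnd ℂ) (F2 (z t))
      + (starRingEnd ℂ) (F3 (z t)) + (starRingEnd ℂ) (R t) := by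
    rw [hf]; simp only [map_add, map_mul, hca]
  have hG2 : (starRingEnd ℂ) (F2 (z t)) = Y20 * (starRingEnd ℂ) (z t) ^ 2
      + Y11 * ((starRingEnd ℂ) (z t) * z t) + Y02 * z t ^ 2 := by
    rw [hF2, hY20, hY11, hY02]; simp
  have key := nf_identity a (z t) ((starRingEnd ℂ) (z t)) (R t) ((starRingEnd ℂ) (R t))
    c20 c11 c02 c30 c12 c03 Z20 Z11 Z02 Z30 Z21 Z12 Z03 Y20 Y11 Y02 (F3 (z t))
    ((starRingEnd ℂ) (F3 (z t))) K (H (z t)) ((starRingEnd ℂ) (H (z t)))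
    h20 h11 h02 h30 h12 h03 hK (by rw [hF3]) (by rw [hH]) f ((starRingEnd ℂ) f)
    (F2 (z t)) ((starRingEnd ℂ) (F2 (z t))) (by rw [hF2]) hG2 hf hg
  refine ⟨f + c20 * (2 * z t * f) + c11 * (f * (starRingEnd ℂ) (z t) + z t * (starRingEnd ℂ) f)
      + c02 * (2 * (starRingEnd ℂ) (z t) * (starRingEnd ℂ) f) + c30 * (3 * z t ^ 2 * f)
      + c12 * (f * (starRingEnd ℂ) (z t) ^ 2 + z t * (2 * (starRingEnd ℂ) (z t) * (starRingEnd ℂ) f))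
      + c03 * (3 * (starRingEnd ℂ) (z t) ^ 2 * (starRingEnd ℂ) f), ?_, ?_⟩
  rotate_left
  · rw [hn, hnv, map_add, key]
    refine (norm_add_le _ _).trans ((add_le_add_left (norm_add_le _ _) _).trans ?_)
    rw [norm_mul, norm_mul, RCLike.norm_conj]
    have e1 := mul_le_mul_of_nonneg_right (hP (z t) hz) (norm_nonneg (R t))
    have e2 := mul_le_mul_of_nonneg_right (hQ (z t) hz) (norm_nonneg (R t))
    have e3 := hS (z t) hz
    simp only [map_add] at e3
    simp only [pow_zero, mul_one] at e1 e2
    have p1 : 0 ≤ ‖R t‖ := norm_nonneg _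
    have p2 : 0 ≤ ‖z t‖ ^ 4 := by positivity
    refine (add_le_add (add_le_add e1 e2) e3).trans ?_
    nlinarith [mul_nonneg hC1 p2, mul_nonneg hC2 p2, mul_nonneg hC3 p1]
  · have hfun : normalFormVar ξ Z20 Z11 Z02 c30 c12 c03 z = fun s =>
        z s + c20 * z s ^ 2 + c11 * (z s * (starRingEnd ℂ) (z s))
        + c02 * (starRingEnd ℂ) (z s) ^ 2 + c30 * z s ^ 3
        + c12 * (z s * (starRingEnd ℂ) (z s) ^ 2) + c03 * (starRingEnd ℂ) (z s) ^ 3 := by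
      funext s
      simp only [normalFormVar, ← hc20, ← hc11, ← hc02]
    rw [hfun]
    have D := ((((((hd'.add ((hd'.pow 2).const_mul c20)).add
      ((hd'.mul hdc).const_mul c11)).add ((hdc.pow 2).const_mul c02)).add
      ((hd'.pow 3).const_mul c30)).add ((hd'.mul (hdc.pow 2)).const_mul c12)).add
      ((hdc.pow 3).const_mul c03))
    refine D.congr_deriv ?_
    simp only [Pi.pow_apply]
    push_cast
    ring
end

section
/- Let σ ∈ (1/√2, 1), ω > 0, set ξ = 2σ√(1−σ²)·ω and b = −(√(1−σ²)+1)/σ, and define on ℝ³∖{0} the functions Ψ₁(x) = e^{−√(ω−ξ)|x|}/(4π|x|) + b·e^{−√(ω+ξ)|x|}/(4π|x|) and Ψ₂(x) = i·( e^{−√(ω−ξ)|x|}/(4π|x|) − b·e^{−√(ω+ξ)|x|}/(4π|x|) ). Then: (i) 0 < ξ < ω, so the exponents are real and positive; (ii) for every x ≠ 0: −ΔΨ₁(x) + ωΨ₁(x) = −iξΨ₂(x) and −ΔΨ₂(x) + ωΨ₂(x) = iξΨ₁(x); (iii) the boundary conditions hold: lim_{x→0} ( Ψ₁(x) − (1+b)/(4π|x|)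 ) = −(2σ+1)·(√ω/(4π))·(1+b) and lim_{x→0} ( Ψ₂(x) − i(1−b)/(4π|x|) ) = −(√ω/(4π))·i·(1−b). -/
open Real Filter

/-- The pointwise Laplacian on `ℝ³`: `Δf(x) = ∑ᵢ D²f(x)(eᵢ, eᵢ)`. -/
noncomputable def lap3 {F : Type*} [NormedAddCommGroup F] [NormedSpace ℝ F]
    (f : EuclideanSpace ℝ (Fin 3) → F) (x : EuclideanSpace ℝ (Fin 3)) : F :=
  ∑ i : Fin 3, iteratedFDeriv ℝ 2 f x ![EuclideanSpace.single i 1, EuclideanSpace.single i 1]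

/-- First component of the eigenfunction associated to `iξ`. -/
noncomputable def Psi1 (ω ξ b : ℝ) (x : EuclideanSpace ℝ (Fin 3)) : ℂ :=
  ((Real.exp (-(Real.sqrt (ω - ξ)) * ‖x‖) / (4 * Real.pi * ‖x‖)
      + b * (Real.exp (-(Real.sqrt (ω + ξ)) * ‖x‖) / (4 * Real.pi * ‖x‖)) : ℝ) : ℂ)

/-- Second component of the eigenfunction associated to `iξ`. -/
noncomputable def Psi2 (ω ξ b : ℝ) (x : EuclideanSpace ℝ (Fin 3)) : ℂ :=
  Complex.I * ((Real.exp (-(Real.sqrt (ω - ξ)) * ‖x‖) / (4 * Real.pi * ‖x‖)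
      - b * (Real.exp (-(Real.sqrt (ω + ξ)) * ‖x‖) / (4 * Real.pi * ‖x‖)) : ℝ) : ℂ)

abbrev E3 := EuclideanSpace ℝ (Fin 3)

lemma hasFDerivAt_norm_aux (x : E3) (hx : x ≠ 0) :
    HasFDerivAt (fun y : E3 => ‖y‖) (‖x‖⁻¹ • innerSL ℝ x) x := by
  have h := (hasStrictFDerivAt_norm_sq x).hasFDerivAt.sqrt (by positivity)
  have h2 : (fun y : E3 => √(‖y‖ ^ 2)) = fun y => ‖y‖ := by
    funext y; simp
  rw [h2] at h
  refine h.congr_fderiv ?_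
  ext v
  have : ‖x‖ ≠ 0 := norm_ne_zero_iff.mpr hx
  simp
  field_simp

/-- Yukawa profile -/
noncomputable def Yuk (k : ℝ) (x : E3) : ℝ := Real.exp (-k * ‖x‖) / (4 * Real.pi * ‖x‖)

lemma Yuk_contDiffAt (k : ℝ) (x : E3) (hx : x ≠ 0) : ContDiffAt ℝ 2 (Yuk k) x := by
  unfold Yuk
  have hn : ContDiffAt ℝ 2 (fun y : E3 => ‖y‖) x := contDiffAt_norm ℝ hx
  have : ‖x‖ ≠ 0 := norm_ne_zero_iff.mpr hx
  refine ContDiffAt.div ?_ ?_ (by positivity)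
  · exact (contDiffAt_const.mul hn).exp
  · exact contDiffAt_const.mul hn

lemma radial_fderiv (G : ℝ → ℝ) (G' : ℝ) (x : E3) (hx : x ≠ 0) (hG : HasDerivAt G G' ‖x‖) :
    HasFDerivAt (fun y : E3 => G ‖y‖) ((G' / ‖x‖) • innerSL ℝ x) x := by
  have := hG.comp_hasFDerivAt x (hasFDerivAt_norm_aux x hx)
  refine this.congr_fderiv ?_
  rw [smul_smul, div_eq_mul_inv]

noncomputable def Hk (k r : ℝ) : ℝ :=
  -(k / r ^ 2 + 1 / r ^ 3) * Real.exp (-k * r) / (4 * Real.pi)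

lemma Yuk_fderiv (k : ℝ) (x : E3) (hx : x ≠ 0) :
    fderiv ℝ (Yuk k) x = Hk k ‖x‖ • innerSL ℝ x := by
  have h0 : ‖x‖ ≠ 0 := norm_ne_zero_iff.mpr hx
  have h1 : HasDerivAt (fun r : ℝ => Real.exp (-k * r) / (4 * Real.pi * r))
      (‖x‖ * Hk k ‖x‖) ‖x‖ := by
    have a := ((hasDerivAt_id ‖x‖).const_mul (-k)).exp
    have c := (hasDerivAt_id ‖x‖).const_mul (4 * Real.pi)
    refine (a.div c (by simp [h0, Real.pi_ne_zero])).congr_deriv ?_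
    have := Real.pi_ne_zero
    simp only [Hk, id]
    field_simp
    ring
  have := (radial_fderiv _ _ x hx h1).fderiv
  rw [mul_div_cancel_left₀ _ h0] at this
  exact this

lemma Yuk_fderiv2 (k : ℝ) (x : E3) (hx : x ≠ 0) (v : E3) :
    fderiv ℝ (fderiv ℝ (Yuk k)) x v v = 
      ((3 * k / ‖x‖ ^ 3 + 3 / ‖x‖ ^ 4 + k ^ 2 / ‖x‖ ^ 2) * Real.exp (-k * ‖x‖) / (4 * Real.pi))
        / ‖x‖ * (inner ℝ x v) ^ 2 + Hk k ‖x‖ * ‖v‖ ^ 2 := by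
  have h0 : ‖x‖ ≠ 0 := norm_ne_zero_iff.mpr hx
  have e : fderiv ℝ (Yuk k) =ᶠ[nhds x] fun y => Hk k ‖y‖ • innerSL ℝ y := by
    filter_upwards [isOpen_ne.mem_nhds hx] with y hy using Yuk_fderiv k y hy
  rw [e.fderiv_eq]
  have h1 : HasDerivAt (Hk k)
      ((3 * k / ‖x‖ ^ 3 + 3 / ‖x‖ ^ 4 + k ^ 2 / ‖x‖ ^ 2) * Real.exp (-k * ‖x‖) / (4 * Real.pi))
      ‖x‖ := by
    have a := ((hasDerivAt_id ‖x‖).const_mul (-k)).exp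
    have p2 := (hasDerivAt_const ‖x‖ k).div ((hasDerivAt_id ‖x‖).pow 2) (by simp [h0])
    have p3 := (hasDerivAt_const ‖x‖ (1:ℝ)).div ((hasDerivAt_id ‖x‖).pow 3) (by simp [h0])
    refine (((p2.add p3).neg.mul a).div_const (4 * Real.pi)).congr_deriv ?_
    have := Real.pi_ne_zero
    simp
    field_simp
    ring
  have h2 := (radial_fderiv _ _ x hx h1).smul (innerSL ℝ (E := E3)).hasFDerivAt
  have h3 := h2.fderiv
  change fderiv ℝ (fun y => Hk k ‖y‖ • innerSL ℝ y) x = _ at h3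
  rw [h3]
  generalize (3 * k / ‖x‖ ^ 3 + 3 / ‖x‖ ^ 4 + k ^ 2 / ‖x‖ ^ 2) * Real.exp (-k * ‖x‖)
    / (4 * Real.pi) / ‖x‖ = d
  change Hk k ‖x‖ * inner ℝ v v + (d * inner ℝ x v) * inner ℝ x v = _
  rw [real_inner_self_eq_norm_sq]
  ring

lemma lap3_eq {F : Type*} [NormedAddCommGroup F] [NormedSpace ℝ F] (f : E3 → F) (x : E3) :
    lap3 f x = Laplacian.laplacian f x := by
  rw [InnerProductSpace.laplacian_eq_iteratedFDeriv_orthonormalBasis f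
    (EuclideanSpace.basisFun (Fin 3) ℝ)]
  simp [lap3]

lemma lap3_Yuk (k : ℝ) (x : E3) (hx : x ≠ 0) : lap3 (Yuk k) x = k ^ 2 * Yuk k x := by
  have h0 : ‖x‖ ≠ 0 := norm_ne_zero_iff.mpr hx
  have hs : x 0 ^ 2 + x 1 ^ 2 + x 2 ^ 2 = ‖x‖ ^ 2 := by
    simp [EuclideanSpace.norm_sq_eq, Fin.sum_univ_three]
  have hp := Real.pi_ne_zero
  simp only [lap3, iteratedFDeriv_two_apply, Matrix.cons_val_zero, Matrix.cons_val_one,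
    Yuk_fderiv2 k x hx, Fin.sum_univ_three, EuclideanSpace.inner_single_right,
    EuclideanSpace.norm_single]
  simp only [conj_trivial, one_mul, norm_one, one_pow, mul_one]
  have : ∀ c d : ℝ, c * x 0 ^ 2 + d + (c * x 1 ^ 2 + d) + (c * x 2 ^ 2 + d)
      = c * ‖x‖ ^ 2 + 3 * d := by intro c d; rw [← hs]; ring
  rw [this]
  simp only [Hk, Yuk]
  field_simp
  ring

lemma lap3_comb (p q : ℂ) (k l : ℝ) (x : E3) (hx : x ≠ 0) :
    lap3 (fun y => p * (Yuk k y : ℂ) + q * (Yuk l y : ℂ)) x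
      = p * (k ^ 2 * Yuk k x : ℝ) + q * (l ^ 2 * Yuk l x : ℝ) := by
  have hc : ∀ k, ContDiffAt ℝ 2 (Complex.ofRealCLM ∘ Yuk k) x := fun k =>
    Complex.ofRealCLM.contDiff.contDiffAt.comp x (Yuk_contDiffAt k x hx)
  have hl : ∀ k, Laplacian.laplacian (Complex.ofRealCLM ∘ Yuk k) x = ((k ^ 2 * Yuk k x : ℝ) : ℂ) := by
    intro k
    rw [(Yuk_contDiffAt k x hx).laplacian_CLM_comp_left, Function.comp_apply, ← lap3_eq,
      lap3_Yuk k x hx]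
    rfl
  have e : (fun y => p * (Yuk k y : ℂ) + q * (Yuk l y : ℂ))
    = p • (Complex.ofRealCLM ∘ Yuk k) + q • (Complex.ofRealCLM ∘ Yuk l) := by
    funext y; simp
  rw [lap3_eq, e, ContDiffAt.laplacian_add (f₁ := p • (Complex.ofRealCLM ∘ Yuk k))
      (f₂ := q • (Complex.ofRealCLM ∘ Yuk l)) ((hc k).const_smul p) ((hc l).const_smul q),
    InnerProductSpace.laplacian_smul _ (hc k), InnerProductSpace.laplacian_smul _ (hc l), hl, hl]
  rfl

lemma Yuk_tendsto (k : ℝ) :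
    Tendsto (fun x : E3 => Yuk k x - 1 / (4 * Real.pi * ‖x‖)) (nhdsWithin 0 {x | x ≠ 0})
      (nhds (-k / (4 * Real.pi))) := by
  have hd : HasDerivAt (fun r : ℝ => Real.exp (-k * r)) (-k) 0 := by
    simpa using ((hasDerivAt_id (0:ℝ)).const_mul (-k)).exp
  have h := hasDerivAt_iff_tendsto_slope_zero.mp hd
  have hn : Tendsto (fun x : E3 => ‖x‖) (nhdsWithin 0 {x | x ≠ 0}) (nhdsWithin 0 {0}ᶜ) := by
    refine tendsto_nhdsWithin_iff.mpr ⟨?_, ?_⟩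
    · have : Tendsto (fun x : E3 => ‖x‖) (nhds 0) (nhds 0) := by
        simpa using (continuous_norm (E := E3)).tendsto 0
      exact this.mono_left nhdsWithin_le_nhds
    · filter_upwards [self_mem_nhdsWithin] with x hx
      simpa using hx
  have := (h.comp hn).div_const (4 * Real.pi)
  refine this.congr' ?_
  filter_upwards [self_mem_nhdsWithin] with x hx
  have h0 : ‖x‖ ≠ 0 := norm_ne_zero_iff.mpr hx
  have hp := Real.pi_ne_zero
  simp [Yuk]
  field_simp

/-- Explicit verification that `Ψ = (Ψ₁, Ψ₂)` is an eigenfunction of the linearization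
at the eigenvalue `iξ`, `ξ = 2σ√(1-σ²)ω`, with `b = -(√(1-σ²)+1)/σ`:
(i) `0 < ξ < ω`; (ii) the eigenvalue system holds away from the origin;
(iii) the δ-interaction boundary conditions hold at the origin. -/
theorem stmt_6 (σ ω ξ b : ℝ) (hσ1 : 1 / Real.sqrt 2 < σ) (hσ2 : σ < 1) (hω : 0 < ω)
    (hξ : ξ = 2 * σ * Real.sqrt (1 - σ ^ 2) * ω)
    (hb : b = -(Real.sqrt (1 - σ ^ 2) + 1) / σ) :
    (0 < ξ ∧ ξ < ω) ∧
    (∀ x : EuclideanSpace ℝ (Fin 3), x ≠ 0 →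
      -lap3 (Psi1 ω ξ b) x + (ω : ℂ) * Psi1 ω ξ b x = -(Complex.I) * (ξ : ℂ) * Psi2 ω ξ b x ∧
      -lap3 (Psi2 ω ξ b) x + (ω : ℂ) * Psi2 ω ξ b x = Complex.I * (ξ : ℂ) * Psi1 ω ξ b x) ∧
    Tendsto (fun x : EuclideanSpace ℝ (Fin 3) =>
        Psi1 ω ξ b x - (((1 + b) / (4 * Real.pi * ‖x‖) : ℝ) : ℂ))
      (nhdsWithin 0 {x | x ≠ 0})
      (nhds ((-(2 * σ + 1) * (Real.sqrt ω / (4 * Real.pi)) * (1 + b) : ℝ) : ℂ)) ∧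
    Tendsto (fun x : EuclideanSpace ℝ (Fin 3) =>
        Psi2 ω ξ b x - Complex.I * (((1 - b) / (4 * Real.pi * ‖x‖) : ℝ) : ℂ))
      (nhdsWithin 0 {x | x ≠ 0})
      (nhds (-((Real.sqrt ω / (4 * Real.pi) : ℝ) : ℂ) * Complex.I * ((1 - b : ℝ) : ℂ))) := by
  have h2 : (0:ℝ) < Real.sqrt 2 := by positivity
  have hσ0 : 0 < σ := lt_trans (by positivity) hσ1
  have hσsq : 1 / 2 < σ ^ 2 := by
    have := pow_lt_pow_left₀ hσ1 (by positivity) (n := 2) (by norm_num)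
    rwa [div_pow, Real.sq_sqrt (by norm_num), one_pow] at this
  obtain ⟨s, hs⟩ : ∃ s, s = Real.sqrt (1 - σ ^ 2) := ⟨_, rfl⟩
  have h1 : 0 < 1 - σ ^ 2 := by nlinarith
  have hs0 : 0 < s := hs ▸ Real.sqrt_pos.mpr h1
  have hss : s ^ 2 = 1 - σ ^ 2 := by rw [hs]; exact Real.sq_sqrt h1.le
  have hsσ : s < σ := by nlinarith
  rw [← hs] at hξ hb
  have hw : Real.sqrt ω ^ 2 = ω := Real.sq_sqrt hω.le
  have hbσ : b * σ = -(s + 1) := by rw [hb]; field_simp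
  have hξ0 : 0 < ξ := by rw [hξ]; positivity
  have hξω : ξ < ω := by
    have : 0 < (σ - s) ^ 2 := by have : 0 < σ - s := by linarith
                                 positivity
    nlinarith [mul_pos this hω]
  have hk : Real.sqrt (ω - ξ) = Real.sqrt ω * (σ - s) := by
    rw [Real.sqrt_eq_iff_mul_self_eq (by linarith)
      (mul_nonneg (Real.sqrt_nonneg _) (by linarith))]
    linear_combination -(σ - s) ^ 2 * hw - ω * hss - hξ
  have hl : Real.sqrt (ω + ξ) = Real.sqrt ω * (σ + s) := by
    rw [Real.sqrt_eq_iff_mul_self_eq (by linarith)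
      (mul_nonneg (Real.sqrt_nonneg _) (by linarith))]
    linear_combination -(σ + s) ^ 2 * hw - ω * hss + hξ
  have hk2 : Real.sqrt (ω - ξ) ^ 2 = ω - ξ := Real.sq_sqrt (by linarith)
  have hl2 : Real.sqrt (ω + ξ) ^ 2 = ω + ξ := Real.sq_sqrt (by linarith)
  have e1 : Psi1 ω ξ b = fun y => (1 : ℂ) * (Yuk (Real.sqrt (ω - ξ)) y : ℂ)
      + (b : ℂ) * (Yuk (Real.sqrt (ω + ξ)) y : ℂ) := by
    funext y; simp only [Psi1, Yuk]; push_cast; ring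
  have e2 : Psi2 ω ξ b = fun y => Complex.I * (Yuk (Real.sqrt (ω - ξ)) y : ℂ)
      + (-(Complex.I * b)) * (Yuk (Real.sqrt (ω + ξ)) y : ℂ) := by
    funext y; simp only [Psi2, Yuk]; push_cast; ring
  refine ⟨⟨hξ0, hξω⟩, ?_, ?_, ?_⟩
  · intro x hx
    rw [e1, e2]
    rw [lap3_comb _ _ _ _ x hx, lap3_comb _ _ _ _ x hx, hk2, hl2]
    push_cast
    constructor
    · linear_combination ((ξ:ℂ) * (Yuk (Real.sqrt (ω - ξ)) x - b * Yuk (Real.sqrt (ω + ξ)) x)) * Complex.I_sq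
    · ring
  · have t := (Yuk_tendsto (Real.sqrt (ω - ξ))).add
      ((Yuk_tendsto (Real.sqrt (ω + ξ))).const_mul b)
    have t' := (Complex.continuous_ofReal.tendsto _).comp t
    have hv : -Real.sqrt (ω - ξ) / (4 * Real.pi) + b * (-Real.sqrt (ω + ξ) / (4 * Real.pi))
        = -(2 * σ + 1) * (Real.sqrt ω / (4 * Real.pi)) * (1 + b) := by
      rw [hk, hl, hb]
      have := Real.pi_ne_zero
      field_simp
      linear_combination hss
    rw [hv] at t'
    refine t'.congr fun x => ?_
    simp only [e1, Function.comp_apply]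
    push_cast
    ring
  · have t := (Yuk_tendsto (Real.sqrt (ω - ξ))).sub
      ((Yuk_tendsto (Real.sqrt (ω + ξ))).const_mul b)
    have t' := ((Complex.continuous_ofReal.tendsto _).comp t).const_mul Complex.I
    have hv : -Real.sqrt (ω - ξ) / (4 * Real.pi) - b * (-Real.sqrt (ω + ξ) / (4 * Real.pi))
        = -(Real.sqrt ω / (4 * Real.pi)) * (1 - b) := by
      rw [hk, hl, hb]
      have := Real.pi_ne_zero
      field_simp
      linear_combination -hss
    rw [hv] at t'
    have hv2 : -((Real.sqrt ω / (4 * Real.pi) : ℝ) : ℂ) * Complex.I * ((1 - b : ℝ) : ℂ)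
      = Complex.I * ((-(Real.sqrt ω / (4 * Real.pi)) * (1 - b) : ℝ) : ℂ) := by
      push_cast; ring
    rw [hv2]
    refine t'.congr fun x => ?_
    simp only [e2, Function.comp_apply]
    push_cast
    ring
end

section
/- Let C₀ > 0 and ε ∈ (0,1], and let q : [0,∞) → ℂ be measurable with |q(s)| ≤ C₀ ε/(1+εs) for all s ≥ 0. Then there exists C' > 0, depending only on C₀, such that for every t ≥ 0: ∫₀^∞ u^{−3/2} |q(t + 1/u)|² du ≤ C' / √(1+εt). -/
open Set MeasureTheory

/-- Quantitative estimate behind the scattering decomposition: if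
`|q(s)| ≤ C₀ ε/(1+εs)`, then `∫₀^∞ u^{-3/2} |q(t+1/u)|² du ≤ C'/√(1+εt)`
with `C'` depending only on `C₀`. -/
theorem stmt_9 (C₀ : ℝ) (hC₀ : 0 < C₀) :
    ∃ C' > (0:ℝ), ∀ ε : ℝ, 0 < ε → ε ≤ 1 → ∀ q : ℝ → ℂ, Measurable q →
      (∀ s : ℝ, 0 ≤ s → ‖q s‖ ≤ C₀ * ε / (1 + ε * s)) →
      ∀ t : ℝ, 0 ≤ t →
        (∫ u in Ioi (0:ℝ), u ^ (-(3:ℝ)/2) * ‖q (t + 1 / u)‖ ^ 2)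
          ≤ C' / Real.sqrt (1 + ε * t) := by
  refine ⟨3 * C₀ ^ 2, by positivity, ?_⟩
  intro ε hε hε1 q hq hb t ht
  have hA : 1 ≤ 1 + ε * t := by nlinarith [mul_nonneg hε.le ht]
  set A := 1 + ε * t with hAdef
  have hA0 : 0 < A := by linarith
  set b := A⁻¹ with hbdef
  have hb0 : 0 < b := by positivity
  have hb1 : b ≤ 1 := inv_le_one_of_one_le₀ hA
  set f : ℝ → ℝ := fun u => u ^ (-(3:ℝ)/2) * ‖q (t + 1 / u)‖ ^ 2 with hf
  have hfm : Measurable f := by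
    have h1 : Measurable fun u : ℝ => q (t + 1 / u) :=
      hq.comp (measurable_const.add (measurable_const.div measurable_id))
    have h2 : Measurable fun u : ℝ => u ^ (-(3:ℝ)/2) := measurable_id.pow_const _
    exact h2.mul (h1.norm.pow_const 2)
  have hq1 : ∀ u : ℝ, 0 < u → ‖q (t + 1 / u)‖ ≤ C₀ * u := by
    intro u hu
    have h := hb (t + 1 / u) (by positivity)
    refine h.trans ?_
    rw [div_le_iff₀ (by positivity)]
    have : C₀ * u * (1 + ε * (t + 1 / u)) = C₀ * u * A + C₀ * ε := by
      rw [hAdef]; field_simp; ring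
    rw [this]
    have : 0 < C₀ * u * A := by positivity
    linarith
  have hq2 : ∀ u : ℝ, 0 < u → ‖q (t + 1 / u)‖ ≤ C₀ * b := by
    intro u hu
    have h := hb (t + 1 / u) (by positivity)
    refine h.trans ?_
    rw [hbdef, ← div_eq_mul_inv]
    have h3 : 0 ≤ ε * (1 / u) := by positivity
    apply div_le_div₀ hC₀.le _ hA0 _
    · nlinarith
    · rw [hAdef, mul_add]; linarith
  have hf0 : ∀ u : ℝ, 0 < u → 0 ≤ f u := fun u hu => by
    simp only [hf]; positivity
  have hf1 : ∀ u ∈ Ioc 0 b, f u ≤ C₀ ^ 2 := by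
    intro u hu
    have hu0 : 0 < u := hu.1
    have hu1 : u ≤ 1 := hu.2.trans hb1
    have h1 : ‖q (t + 1 / u)‖ ^ 2 ≤ (C₀ * u) ^ 2 := by gcongr; exact hq1 u hu0
    have h2 : u ^ (-(3:ℝ)/2) * u ^ 2 = u ^ ((1:ℝ)/2) := by
      rw [← Real.rpow_natCast u 2, ← Real.rpow_add hu0]; norm_num
    have h3 : u ^ ((1:ℝ)/2) ≤ 1 := Real.rpow_le_one hu0.le hu1 (by norm_num)
    calc f u ≤ u ^ (-(3:ℝ)/2) * (C₀ * u) ^ 2 := by simp only [hf]; gcongr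
      _ = C₀ ^ 2 * (u ^ (-(3:ℝ)/2) * u ^ 2) := by ring
      _ ≤ C₀ ^ 2 * 1 := by rw [h2]; gcongr
      _ = C₀ ^ 2 := mul_one _
  have hf2 : ∀ u ∈ Ioi b, f u ≤ u ^ (-(3:ℝ)/2) * (C₀ * b) ^ 2 := by
    intro u hu
    have hu0 : 0 < u := hb0.trans hu
    have := hq2 u hu0
    simp only [hf]; gcongr
  have hi2 : IntegrableOn (fun u : ℝ => u ^ (-(3:ℝ)/2) * (C₀ * b) ^ 2) (Ioi b) :=
    (integrableOn_Ioi_rpow_of_lt (by norm_num) hb0).mul_const _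
  have hi1 : IntegrableOn (fun _ : ℝ => C₀ ^ 2) (Ioc 0 b) :=
    integrableOn_const (by simp)
  have hfi1 : IntegrableOn f (Ioc 0 b) := by
    refine Integrable.mono' hi1 hfm.aestronglyMeasurable ?_
    refine (ae_restrict_mem measurableSet_Ioc).mono fun u hu => ?_
    rw [Real.norm_of_nonneg (hf0 u hu.1)]; exact hf1 u hu
  have hfi2 : IntegrableOn f (Ioi b) := by
    refine Integrable.mono' hi2 hfm.aestronglyMeasurable ?_
    refine (ae_restrict_mem measurableSet_Ioi).mono fun u hu => ?_
    rw [Real.norm_of_nonneg (hf0 u (hb0.trans hu))]; exact hf2 u hu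
  have e1 : ∫ u in Ioc 0 b, f u ≤ C₀ ^ 2 * b := by
    refine (setIntegral_mono_on hfi1 hi1 measurableSet_Ioc hf1).trans ?_
    simp [hb0.le, mul_comm]
  have hs : 0 < Real.sqrt b := Real.sqrt_pos.2 hb0
  have hsq : Real.sqrt b ^ 2 = b := Real.sq_sqrt hb0.le
  have hs1 : Real.sqrt b ≤ 1 := Real.sqrt_le_one.2 hb1
  have e2 : ∫ u in Ioi b, f u ≤ 2 * C₀ ^ 2 * Real.sqrt b ^ 3 := by
    refine (setIntegral_mono_on hfi2 hi2 measurableSet_Ioi hf2).trans ?_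
    rw [integral_mul_const, integral_Ioi_rpow_of_lt (by norm_num) hb0]
    have : b ^ (-(3:ℝ)/2 + 1) = (Real.sqrt b)⁻¹ := by
      rw [Real.sqrt_eq_rpow, ← Real.rpow_neg hb0.le]; norm_num
    rw [this, mul_pow]
    nth_rewrite 2 [← hsq]
    apply le_of_eq
    field_simp
    norm_num
  have hsplit : ∫ u in Ioi 0, f u = (∫ u in Ioc 0 b, f u) + ∫ u in Ioi b, f u := by
    rw [← setIntegral_union (Ioc_disjoint_Ioi le_rfl) measurableSet_Ioi hfi1 hfi2,
      Ioc_union_Ioi_eq_Ioi hb0.le]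
  have hfin : 3 * C₀ ^ 2 / Real.sqrt A = 3 * C₀ ^ 2 * Real.sqrt b := by
    rw [hbdef, Real.sqrt_inv, div_eq_mul_inv]
  rw [hsplit, hfin]
  have k1 : b ≤ Real.sqrt b := by nlinarith
  have k2 : Real.sqrt b ^ 3 ≤ Real.sqrt b := by
    simpa using pow_le_pow_of_le_one hs.le hs1 (show 1 ≤ 3 by norm_num)
  have hC2 : 0 < C₀ ^ 2 := by positivity
  nlinarith [mul_le_mul_of_nonneg_left k1 hC2.le, mul_le_mul_of_nonneg_left k2 hC2.le]
end

section
/- For every ω > 0 and α > 0 there exists C > 0 such that for every a > 0 and every t ≥ 0 the improper integral I(t,a) := lim_{R→∞} ∫_t^R exp( i( ωτ − a²/(4τ) ) ) · τ^{3/2}/(a² + 4ατ²) dτ exists, and one has |I(0,a)| ≤ C·a^{−1/2}, and |I(t,a)| ≤ C·t^{−1/2} for all t > 0. -/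
open Filter

namespace Stmt10

noncomputable def ph (ω a τ : ℝ) : ℂ :=
  Complex.exp (Complex.I * ((ω * τ - a ^ 2 / (4 * τ) : ℝ) : ℂ))

noncomputable def g (α a τ : ℝ) : ℝ := τ ^ ((3:ℝ)/2) / (a ^ 2 + 4 * α * τ ^ 2)

noncomputable def f (ω α a τ : ℝ) : ℂ := ph ω a τ * ((g α a τ : ℝ) : ℂ)

noncomputable def k (ω α a τ : ℝ) : ℝ :=
  4 * τ ^ ((5:ℝ)/2) / ((a ^ 2 + 4 * α * τ ^ 2) * (a ^ 2 + 4 * ω * τ ^ 2))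

noncomputable def h (ω α a τ : ℝ) : ℝ := 
  4 * τ ^ ((7:ℝ)/2) / ((a ^ 2 + 4 * α * τ ^ 2) * (a ^ 2 + 4 * ω * τ ^ 2))

noncomputable def h' (ω α a τ : ℝ) : ℝ :=
  k ω α a τ * (7/2 - 8 * α * τ ^ 2 / (a ^ 2 + 4 * α * τ ^ 2)
    - 8 * ω * τ ^ 2 / (a ^ 2 + 4 * ω * τ ^ 2))

lemma norm_ph (ω a τ : ℝ) : ‖ph ω a τ‖ = 1 := by
  unfold ph
  rw [mul_comm]
  exact Complex.norm_exp_ofReal_mul_I _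

lemma continuous_g {α a : ℝ} (hα : 0 < α) (ha : 0 < a) : Continuous (g α a) := by
  unfold g
  refine Continuous.div ?_ (by fun_prop) (fun x => by positivity)
  exact Real.continuous_rpow_const (by norm_num)

lemma measurable_f (ω α a : ℝ) : Measurable (f ω α a) := by
  unfold f ph g
  fun_prop

lemma ii_f {ω α a : ℝ} (hα : 0 < α) (ha : 0 < a) (s R : ℝ) :
    IntervalIntegrable (f ω α a) MeasureTheory.volume s R := by
  refine IntervalIntegrable.mono_fun ((continuous_g hα ha).intervalIntegrable s R)
    (measurable_f ω α a).aestronglyMeasurable ?_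
  refine Eventually.of_forall fun x => ?_
  simp [f, norm_ph]

lemma h_eq {ω α a τ : ℝ} (hτ : 0 < τ) : h ω α a τ = τ * k ω α a τ := by
  unfold h k
  have : τ ^ ((7:ℝ)/2) = τ * τ ^ ((5:ℝ)/2) := by
    rw [← Real.rpow_one_add' hτ.le (by norm_num)]; norm_num
  rw [this]; ring

lemma k_nonneg {ω α a τ : ℝ} (hω : 0 < ω) (hα : 0 < α) (hτ : 0 < τ) : 0 ≤ k ω α a τ := by
  unfold k; positivity

lemma abs_h' {ω α a τ : ℝ} (hω : 0 < ω) (hα : 0 < α) (ha : 0 < a) (hτ : 0 < τ) :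
    |h' ω α a τ| ≤ 7/2 * k ω α a τ := by
  unfold h'
  rw [abs_mul, abs_of_nonneg (k_nonneg hω hα hτ), mul_comm]
  refine mul_le_mul_of_nonneg_right ?_ (k_nonneg hω hα hτ)
  have h1 : 8 * α * τ ^ 2 / (a ^ 2 + 4 * α * τ ^ 2) ≤ 2 := by
    rw [div_le_iff₀ (by positivity)]; nlinarith [sq_nonneg a]
  have h2 : 8 * ω * τ ^ 2 / (a ^ 2 + 4 * ω * τ ^ 2) ≤ 2 := by
    rw [div_le_iff₀ (by positivity)]; nlinarith [sq_nonneg a]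
  have h3 : 0 ≤ 8 * α * τ ^ 2 / (a ^ 2 + 4 * α * τ ^ 2) := by positivity
  have h4 : 0 ≤ 8 * ω * τ ^ 2 / (a ^ 2 + 4 * ω * τ ^ 2) := by positivity
  rw [abs_le]; constructor <;> linarith

lemma k_le1 {ω α a τ : ℝ} (hω : 0 < ω) (hα : 0 < α) (hτ : 0 < τ) :
    k ω α a τ ≤ 1 / (4 * α * ω) * τ ^ (-(3:ℝ)/2) := by
  unfold k
  have e : τ ^ ((5:ℝ)/2) = τ ^ (-(3:ℝ)/2) * τ ^ 4 := by
    rw [← Real.rpow_natCast, ← Real.rpow_add hτ]; norm_num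
  have : 4 * τ ^ ((5:ℝ)/2) / ((4 * α * τ ^ 2) * (4 * ω * τ ^ 2))
      = 1 / (4 * α * ω) * τ ^ (-(3:ℝ)/2) := by
    rw [e]; field_simp
  rw [← this]
  gcongr
  · nlinarith [sq_nonneg a]
  · nlinarith [sq_nonneg a]

lemma k_le2 {ω α a τ : ℝ} (hω : 0 < ω) (hα : 0 < α) (ha : 0 < a) (hτ : 0 < τ) (hta : τ ≤ a) :
    k ω α a τ ≤ 4 * a ^ (-(3:ℝ)/2) := by
  unfold k
  have e : a ^ ((5:ℝ)/2) = a ^ (-(3:ℝ)/2) * a ^ 4 := by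
    rw [← Real.rpow_natCast, ← Real.rpow_add ha]; norm_num
  have : 4 * a ^ ((5:ℝ)/2) / (a ^ 2 * a ^ 2) = 4 * a ^ (-(3:ℝ)/2) := by
    rw [e]; field_simp
  rw [← this]
  gcongr
  · have : 0 ≤ 4 * α * τ ^ 2 := by positivity
    linarith
  · have : 0 ≤ 4 * ω * τ ^ 2 := by positivity
    linarith

lemma hasDerivAt_h {ω α a τ : ℝ} (hω : 0 < ω) (hα : 0 < α) (ha : 0 < a) (hτ : 0 < τ) :
    HasDerivAt (h ω α a) (h' ω α a τ) τ := by
  have h1 : HasDerivAt (fun x : ℝ => 4 * x ^ ((7:ℝ)/2)) (4 * ((7/2) * τ ^ ((5:ℝ)/2))) τ := by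
    have := (Real.hasDerivAt_rpow_const (x := τ) (p := (7:ℝ)/2) (Or.inl hτ.ne')).const_mul 4
    norm_num at this ⊢
    exact this
  have hA : ∀ c : ℝ, HasDerivAt (fun x : ℝ => a ^ 2 + 4 * c * x ^ 2) (8 * c * τ) τ := by
    intro c
    have := ((hasDerivAt_pow 2 τ).const_mul (4 * c)).const_add (a ^ 2)
    refine this.congr_deriv ?_
    push_cast; ring
  have h2 := h1.div ((hA α).mul (hA ω)) (by simp only [Pi.mul_apply]; positivity)
  refine h2.congr_deriv ?_
  symm
  unfold h' k
  have : τ ^ ((7:ℝ)/2) = τ * τ ^ ((5:ℝ)/2) := by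
    rw [← Real.rpow_one_add' hτ.le (by norm_num)]; norm_num
  simp only [Pi.mul_apply]
  rw [this]
  field_simp
  ring

lemma hasDerivAt_ph {ω a τ : ℝ} (hτ : 0 < τ) :
    HasDerivAt (ph ω a) (ph ω a τ * (Complex.I * ((ω + a ^ 2 / (4 * τ ^ 2) : ℝ) : ℂ))) τ := by
  have h1 : HasDerivAt (fun x : ℝ => ω * x - a ^ 2 / (4 * x)) (ω + a ^ 2 / (4 * τ ^ 2)) τ := by
    have h2 := ((hasDerivAt_id τ).const_mul ω).sub
      ((hasDerivAt_const τ (a ^ 2)).div ((hasDerivAt_id τ).const_mul 4) 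
        (by simp only [id]; positivity))
    refine h2.congr_deriv ?_
    simp only [id]
    field_simp
    ring
  exact (h1.ofReal_comp.const_mul Complex.I).cexp

lemma hφ {ω α a τ : ℝ} (hω : 0 < ω) (hα : 0 < α) (ha : 0 < a) (hτ : 0 < τ) :
    (ω + a ^ 2 / (4 * τ ^ 2)) * h ω α a τ = g α a τ := by
  unfold h g
  have : τ ^ ((7:ℝ)/2) = τ ^ 2 * τ ^ ((3:ℝ)/2) := by
    rw [← Real.rpow_natCast, ← Real.rpow_add hτ]; norm_num
  rw [this]
  field_simp
  ring

lemma hasDerivAt_G {ω α a τ : ℝ} (hω : 0 < ω) (hα : 0 < α) (ha : 0 < a) (hτ : 0 < τ) :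
    HasDerivAt (fun x => -Complex.I * (ph ω a x * (h ω α a x : ℂ)))
      (f ω α a τ - Complex.I * (ph ω a τ * (h' ω α a τ : ℂ))) τ := by
  have h2 := ((hasDerivAt_ph (ω := ω) (a := a) hτ).mul
    (hasDerivAt_h hω hα ha hτ).ofReal_comp).const_mul (-Complex.I)
  refine h2.congr_deriv ?_
  symm
  unfold f
  rw [← hφ hω hα ha hτ]
  push_cast
  linear_combination ((ph ω a τ * (ω + a ^ 2 / (4 * τ ^ 2)) * h ω α a τ)) * Complex.I_mul_I

lemma ii_e {ω α a : ℝ} (hω : 0 < ω) (hα : 0 < α) (ha : 0 < a) {s R : ℝ} (hs : 0 < s)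
    (hR : s ≤ R) :
    IntervalIntegrable (fun τ => Complex.I * (ph ω a τ * (h' ω α a τ : ℂ)))
      MeasureTheory.volume s R := by
  apply ContinuousOn.intervalIntegrable
  rw [Set.uIcc_of_le hR]
  intro τ hτ
  have hτ0 : 0 < τ := hs.trans_le hτ.1
  apply ContinuousAt.continuousWithinAt
  have : ContinuousAt (h' ω α a) τ := by
    unfold h' k
    have : ContinuousAt (fun x : ℝ => x ^ ((5:ℝ)/2)) τ :=
      Real.continuousAt_rpow_const _ _ (Or.inl hτ0.ne')
    have e1 : a ^ 2 + 4 * α * τ ^ 2 ≠ 0 := by positivity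
    have e2 : a ^ 2 + 4 * ω * τ ^ 2 ≠ 0 := by positivity
    fun_prop (disch := first | assumption | positivity)
  exact continuousAt_const.mul ((hasDerivAt_ph hτ0).continuousAt.mul
    (Complex.continuous_ofReal.continuousAt.comp this))

lemma core {ω α a : ℝ} (hω : 0 < ω) (hα : 0 < α) (ha : 0 < a) {s R : ℝ} (hs : 0 < s)
    (hR : s ≤ R) :
    ‖∫ τ in s..R, f ω α a τ‖ ≤ h ω α a s + h ω α a R +
      ‖∫ τ in s..R, Complex.I * (ph ω a τ * (h' ω α a τ : ℂ))‖ := by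
  have h1 := intervalIntegral.integral_eq_sub_of_hasDerivAt (a := s) (b := R)
    (f := fun x => -Complex.I * (ph ω a x * (h ω α a x : ℂ)))
    (f' := fun τ => f ω α a τ - Complex.I * (ph ω a τ * (h' ω α a τ : ℂ)))
    (fun τ hτ => by
      rw [Set.uIcc_of_le hR] at hτ
      exact hasDerivAt_G hω hα ha (hs.trans_le hτ.1))
    ((ii_f hα ha s R).sub (ii_e hω hα ha hs hR))
  rw [intervalIntegral.integral_sub (ii_f hα ha s R) (ii_e hω hα ha hs hR),
    sub_eq_iff_eq_add] at h1
  rw [h1]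
  have hn : ∀ x, 0 < x → ‖-Complex.I * (ph ω a x * (h ω α a x : ℂ))‖ = h ω α a x := by
    intro x hx
    have : 0 ≤ h ω α a x := by rw [h_eq hx]; exact mul_nonneg hx.le (k_nonneg hω hα hx)
    simp [norm_ph, abs_of_nonneg this]
  refine (norm_add_le _ _).trans ?_
  gcongr
  refine (norm_sub_le _ _).trans ?_
  rw [hn s hs, hn R (hs.trans_le hR), add_comm]

lemma norm_e {ω α a τ : ℝ} (hω : 0 < ω) (hα : 0 < α) (ha : 0 < a) (hτ : 0 < τ) :
    ‖Complex.I * (ph ω a τ * (h' ω α a τ : ℂ))‖ ≤ 7/2 * k ω α a τ := by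
  simpa [norm_ph] using abs_h' hω hα ha hτ

lemma rp {x : ℝ} (hx : 0 < x) : x * x ^ (-(3:ℝ)/2) = x ^ (-(1:ℝ)/2) := by
  rw [← Real.rpow_one_add' hx.le (by norm_num)]; norm_num

lemma bound1 {ω α a : ℝ} (hω : 0 < ω) (hα : 0 < α) (ha : 0 < a) {s R : ℝ} (hs : 0 < s)
    (hR : s ≤ R) :
    ‖∫ τ in s..R, f ω α a τ‖ ≤ 9 * (1 / (4 * α * ω)) * s ^ (-(1:ℝ)/2) := by
  have hR0 := hs.trans_le hR
  set K := 1 / (4 * α * ω) with hK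
  have hK0 : 0 < K := by positivity
  have hh : ∀ x, 0 < x → h ω α a x ≤ K * x ^ (-(1:ℝ)/2) := by
    intro x hx
    rw [h_eq hx, ← rp hx]
    calc x * k ω α a x ≤ x * (K * x ^ (-(3:ℝ)/2)) := by
          gcongr
          exact k_le1 hω hα hx
      _ = _ := by ring
  have hI : ‖∫ τ in s..R, Complex.I * (ph ω a τ * (h' ω α a τ : ℂ))‖
      ≤ ∫ τ in s..R, 7/2 * K * τ ^ (-(3:ℝ)/2) := by
    apply intervalIntegral.norm_integral_le_of_norm_le hR
    · refine Eventually.of_forall fun τ hτ => ?_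
      have hτ0 : 0 < τ := hs.trans hτ.1
      have := k_le1 (a := a) hω hα hτ0
      refine (norm_e hω hα ha hτ0).trans ?_
      rw [mul_assoc]
      gcongr
    · apply ContinuousOn.intervalIntegrable
      rw [Set.uIcc_of_le hR]
      intro τ hτ
      exact (continuousAt_const.mul (Real.continuousAt_rpow_const _ _
        (Or.inl (hs.trans_le hτ.1).ne'))).continuousWithinAt
  rw [intervalIntegral.integral_const_mul (7/2 * K), integral_rpow (Or.inr ⟨by norm_num, by
    rw [Set.uIcc_of_le hR]; intro hc; exact absurd hc.1 (not_le.2 hs)⟩)] at hI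
  have hc := core hω hα ha hs hR
  have e : (-(3:ℝ)/2 + 1) = -(1:ℝ)/2 := by norm_num
  rw [e] at hI
  have hp : 0 < R ^ (-(1:ℝ)/2) := by positivity
  have h1 := hh s hs
  have h2 := hh R hR0
  have e2 : 7/2 * K * ((R ^ (-(1:ℝ)/2) - s ^ (-(1:ℝ)/2)) / (-(1:ℝ)/2))
    = 7 * K * s ^ (-(1:ℝ)/2) - 7 * K * R ^ (-(1:ℝ)/2) := by ring
  rw [e2] at hI
  have h3 : 0 < K * R ^ (-(1:ℝ)/2) := by positivity
  have h4 : 0 < K * s ^ (-(1:ℝ)/2) := by positivity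
  linarith

lemma bound2 {ω α a : ℝ} (hω : 0 < ω) (hα : 0 < α) (ha : 0 < a) {s : ℝ} (hs : 0 < s)
    (hR : s ≤ a) :
    ‖∫ τ in s..a, f ω α a τ‖ ≤ 22 * a ^ (-(1:ℝ)/2) := by
  have hp : 0 < a ^ (-(3:ℝ)/2) := by positivity
  have hh : ∀ x, 0 < x → x ≤ a → h ω α a x ≤ 4 * a ^ (-(1:ℝ)/2) := by
    intro x hx hxa
    rw [h_eq hx, ← rp ha]
    calc x * k ω α a x ≤ a * (4 * a ^ (-(3:ℝ)/2)) := by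
          gcongr
          · exact k_nonneg hω hα hx
          · exact k_le2 hω hα ha hx hxa
      _ = _ := by ring
  have hI : ‖∫ τ in s..a, Complex.I * (ph ω a τ * (h' ω α a τ : ℂ))‖
      ≤ 14 * a ^ (-(3:ℝ)/2) * |a - s| := by
    apply intervalIntegral.norm_integral_le_of_norm_le_const
    intro τ hτ
    rw [Set.uIoc_of_le hR] at hτ
    have hτ0 : 0 < τ := hs.trans hτ.1
    have := k_le2 hω hα ha hτ0 hτ.2
    refine (norm_e hω hα ha hτ0).trans ?_
    linarith
  rw [abs_of_nonneg (by linarith)] at hI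
  have h5 : 14 * a ^ (-(3:ℝ)/2) * (a - s) ≤ 14 * a ^ (-(1:ℝ)/2) := by
    rw [← rp ha]
    nlinarith [mul_pos hp hs]
  have hc := core hω hα ha hs hR
  have h1 := hh s hs hR
  have h2 := hh a ha le_rfl
  linarith

lemma bound3 {ω α a : ℝ} (hω : 0 < ω) (hα : 0 < α) (ha : 0 < a) :
    ‖∫ τ in (0:ℝ)..a, f ω α a τ‖ ≤ 22 * a ^ (-(1:ℝ)/2) := by
  have hcont : Continuous (fun s => ∫ τ in s..a, f ω α a τ) := by
    have h1 := intervalIntegral.continuous_primitive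
      (fun x y => ii_f (ω := ω) hα ha x y) a
    simp_rw [fun s => intervalIntegral.integral_symm (f := f ω α a) (μ := MeasureTheory.volume) a s]
    exact h1.neg
  have ht : Tendsto (fun s => ‖∫ τ in s..a, f ω α a τ‖) (nhdsWithin 0 (Set.Ioi 0))
      (nhds ‖∫ τ in (0:ℝ)..a, f ω α a τ‖) :=
    (hcont.norm.tendsto 0).mono_left nhdsWithin_le_nhds
  refine le_of_tendsto ht ?_
  filter_upwards [Ioc_mem_nhdsGT ha] with s hs
  exact bound2 hω hα ha hs.1 hs.2

lemma exists_lim {ω α a : ℝ} (hω : 0 < ω) (hα : 0 < α) (ha : 0 < a) (t : ℝ) :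
    ∃ l : ℂ, Tendsto (fun R : ℝ => ∫ τ in t..R, f ω α a τ) atTop (nhds l) := by
  apply cauchySeq_tendsto_of_complete
  rw [Metric.cauchySeq_iff']
  intro ε hε
  have h1 : Tendsto (fun s : ℝ => 9 * (1 / (4 * α * ω)) * s ^ (-(1:ℝ)/2)) atTop (nhds 0) := by
    have := (tendsto_rpow_neg_atTop (y := 1/2) (by norm_num)).const_mul (9 * (1 / (4 * α * ω)))
    simpa [neg_div] using this
  obtain ⟨N, hN, hN0⟩ := ((h1.eventually (gt_mem_nhds hε)).and (eventually_gt_atTop 0)).exists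
  refine ⟨N, fun n hn => ?_⟩
  rw [dist_eq_norm, intervalIntegral.integral_interval_sub_left (ii_f hα ha _ _) (ii_f hα ha _ _)]
  exact (bound1 hω hα ha hN0 hn).trans_lt hN

end Stmt10

/-- Oscillatory-integral bounds: the improper integral
`I(t,a) = lim_{R→∞} ∫ₜ^R e^{i(ωτ - a²/(4τ))} τ^{3/2}/(a² + 4ατ²) dτ` exists, with
`|I(0,a)| ≤ C a^{-1/2}` and `|I(t,a)| ≤ C t^{-1/2}` for `t > 0`. -/
theorem stmt_10 (ω α : ℝ) (hω : 0 < ω) (hα : 0 < α) :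
    ∃ C > (0:ℝ), ∃ I : ℝ → ℝ → ℂ,
      ∀ a : ℝ, 0 < a →
        (∀ t : ℝ, 0 ≤ t →
          Tendsto (fun R : ℝ => ∫ τ in t..R,
              Complex.exp (Complex.I * ((ω * τ - a ^ 2 / (4 * τ) : ℝ) : ℂ)) *
                ((τ ^ ((3:ℝ)/2) / (a ^ 2 + 4 * α * τ ^ 2) : ℝ) : ℂ))
            atTop (nhds (I t a))) ∧
        ‖I 0 a‖ ≤ C * a ^ (-(1:ℝ)/2) ∧
        ∀ t : ℝ, 0 < t → ‖I t a‖ ≤ C * t ^ (-(1:ℝ)/2) := by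
  classical
  have hex : ∀ t a : ℝ, ∃ l : ℂ, 0 < a →
      Tendsto (fun R : ℝ => ∫ τ in t..R, Stmt10.f ω α a τ) atTop (nhds l) := by
    intro t a
    by_cases ha : 0 < a
    · obtain ⟨l, hl⟩ := Stmt10.exists_lim hω hα ha t
      exact ⟨l, fun _ => hl⟩
    · exact ⟨0, fun h => absurd h ha⟩
  choose I hI using hex
  refine ⟨9 * (1 / (4 * α * ω)) + 22, by positivity, I, fun a ha => ⟨fun t _ => hI t a ha, ?_, ?_⟩⟩
  · refine le_of_tendsto (hI 0 a ha).norm ?_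
    filter_upwards [eventually_ge_atTop a] with R hR
    rw [← intervalIntegral.integral_add_adjacent_intervals (Stmt10.ii_f hα ha 0 a)
      (Stmt10.ii_f hα ha a R)]
    refine (norm_add_le _ _).trans ?_
    have h1 := Stmt10.bound3 hω hα ha
    have h2 := Stmt10.bound1 hω hα ha ha hR
    linarith
  · intro t ht
    refine le_of_tendsto (hI t a ha).norm ?_
    filter_upwards [eventually_ge_atTop t] with R hR
    have h2 := Stmt10.bound1 hω hα ha ht hR
    have : 0 < t ^ (-(1:ℝ)/2) := by positivity
    linarith
end
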